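/- arXiv:cs/0312045 — 5 statements merged into one kernel-verified Lean document; each statement's English description precedes it below -/
import Mathlib

section
/- For any program Ω with weight constraints, a consistent set Z of literals is an answer set for Ω if and only if Z is an answer set for the program with nested expressions [Ω]. -/
open Classical

/-- A literal: a propositional atom `a` or its classical negation `¬ a`. -/
inductive Lit (α : Type) where
  | pos : α → Lit α
  | neg : α → Lit α

/-- The atom of a literal. -/
def Lit.atom {α : Type} : Lit α → α
  | .pos a => a
  | .neg a => a

/-- Mapping literals along a map of atoms. -/
def Lit.map {α β : Type} (f : α → β) : Lit α → Lit β
  | .pos a => .pos (f a)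
  | .neg a => .neg (f a)

/-- A set of literals is consistent if it contains no pair `a`, `¬ a`. -/
def LitConsistent {α : Type} (Z : Set (Lit α)) : Prop :=
  ∀ a : α, ¬(Lit.pos a ∈ Z ∧ Lit.neg a ∈ Z)

/-- Formulas (nested expressions): elementary formulas are literals, `⊥` and `⊤`;
formulas are built from them using negation as failure `naf`, conjunction `conj`
and disjunction `disj`. -/
inductive Formula (α : Type) where
  | lit : Lit α → Formula α
  | fbot : Formula α
  | ftop : Formula α
  | naf : Formula α → Formula α
  | conj : Formula α → Formula α → Formula α
  | disj : Formula α → Formula α → Formula α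

/-- Satisfaction of a formula by a set of literals. -/
def Formula.sat {α : Type} (Z : Set (Lit α)) : Formula α → Prop
  | .lit l => l ∈ Z
  | .fbot => False
  | .ftop => True
  | .naf F => ¬ F.sat Z
  | .conj F G => F.sat Z ∧ G.sat Z
  | .disj F G => F.sat Z ∨ G.sat Z

/-- A rule with nested expressions: `head ← body`. -/
structure NRule (α : Type) where
  head : Formula α
  body : Formula α

/-- `Z` satisfies a program (a set of rules). -/
def progSat {α : Type} (Z : Set (Lit α)) (P : Set (NRule α)) : Prop :=
  ∀ r ∈ P, r.body.sat Z → r.head.sat Z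

/-- The reduct `F^Z` of a formula relative to a set of literals `Z`. -/
noncomputable def Formula.reduct {α : Type} (Z : Set (Lit α)) : Formula α → Formula α
  | .lit l => .lit l
  | .fbot => .fbot
  | .ftop => .ftop
  | .naf F => if F.sat Z then .fbot else .ftop
  | .conj F G => .conj (F.reduct Z) (G.reduct Z)
  | .disj F G => .disj (F.reduct Z) (G.reduct Z)

/-- The reduct `Π^Z` of a program. -/
noncomputable def progReduct {α : Type} (Z : Set (Lit α)) (P : Set (NRule α)) : Set (NRule α) :=
  (fun r : NRule α => NRule.mk (r.head.reduct Z) (r.body.reduct Z)) '' P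

/-- `Z` is minimal (under inclusion) among the consistent sets of literals satisfying `P`. -/
def MinimalSat {α : Type} (Z : Set (Lit α)) (P : Set (NRule α)) : Prop :=
  LitConsistent Z ∧ progSat Z P ∧
    ∀ Z' : Set (Lit α), LitConsistent Z' → progSat Z' P → Z' ⊆ Z → Z' = Z

/-- `Z` is an answer set for a program `P` with nested expressions:
`Z` is minimal among the consistent sets satisfying the reduct `P^Z`. -/
def AnswerSet {α : Type} (Z : Set (Lit α)) (P : Set (NRule α)) : Prop :=
  MinimalSat Z (progReduct Z P)

/-- Strong equivalence of programs with nested expressions. -/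
def StrongEq {α : Type} (P₁ P₂ : Set (NRule α)) : Prop :=
  ∀ P : Set (NRule α), ∀ Z : Set (Lit α), AnswerSet Z (P₁ ∪ P) ↔ AnswerSet Z (P₂ ∪ P)

/-- Multiple conjunction (the empty conjunction is `⊤`). -/
def bigConj {α : Type} : List (Formula α) → Formula α
  | [] => .ftop
  | F :: Fs => .conj F (bigConj Fs)

/-- Multiple disjunction (the empty disjunction is `⊥`). -/
def bigDisj {α : Type} : List (Formula α) → Formula α
  | [] => .fbot
  | F :: Fs => .disj F (bigDisj Fs)

/-- `⟨F₁,…,F_n⟩:X`: the disjunction over `I ∈ X` of the conjunctions of the `Fᵢ`, `i ∈ I`. -/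
noncomputable def angled {α : Type} {n : ℕ} (F : Fin n → Formula α) (X : Finset (Finset (Fin n))) :
    Formula α :=
  bigDisj (X.toList.map fun I => bigConj (I.toList.map F))
/-- A rule element: a literal (positive rule element) or a literal
prefixed with negation as failure (negative rule element). -/
inductive RElem (α : Type) where
  | pos : Lit α → RElem α
  | neg : Lit α → RElem α

/-- Satisfaction of a rule element by a set of literals. -/
def RElem.sat {α : Type} (Z : Set (Lit α)) : RElem α → Prop
  | .pos l => l ∈ Z
  | .neg l => l ∉ Z

/-- Whether a rule element is negative. -/
def RElem.isNegB {α : Type} : RElem α → Bool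
  | .pos _ => false
  | .neg _ => true

/-- The sum of the weights of the entries of `S` that are satisfied by `Z`. -/
noncomputable def weightSum {α : Type} (Z : Set (Lit α)) (S : List (RElem α × ℝ)) : ℝ :=
  (S.map fun p => if p.1.sat Z then p.2 else 0).sum

/-- A weight constraint `L ≤ {c₁=w₁,…,c_m=w_m} ≤ U` with nonnegative weights;
`L` and `U` may be `−∞`/`+∞`. -/
structure WConstraint (α : Type) where
  L : EReal
  S : List (RElem α × ℝ)
  U : EReal
  nonneg : ∀ p ∈ S, (0 : ℝ) ≤ p.2

/-- `Z` satisfies the weight constraint `L ≤ S ≤ U`. -/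
def WConstraint.sat {α : Type} (Z : Set (Lit α)) (C : WConstraint α) : Prop :=
  C.L ≤ (weightSum Z C.S : EReal) ∧ (weightSum Z C.S : EReal) ≤ C.U

/-- A rule with weight constraints, `C₀ ← C₁,…,C_n`. -/
structure WRule (α : Type) where
  head : WConstraint α
  body : List (WConstraint α)

/-- `Z` satisfies a program with weight constraints. -/
def wProgSat {α : Type} (Z : Set (Lit α)) (Ω : Set (WRule α)) : Prop :=
  ∀ R ∈ Ω, (∀ C ∈ R.body, C.sat Z) → R.head.sat Z

/-- A weight constraint of the form `L ≤ S` (no upper bound), with nonnegative weights. -/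
structure LConstraint (α : Type) where
  L : EReal
  S : List (RElem α × ℝ)
  nonneg : ∀ p ∈ S, (0 : ℝ) ≤ p.2

/-- Satisfaction of a lower-bound constraint (by an arbitrary set of literals). -/
def LConstraint.sat {α : Type} (Z : Set (Lit α)) (C : LConstraint α) : Prop :=
  C.L ≤ (weightSum Z C.S : EReal)

/-- A Horn rule: a literal as head, lower-bound constraints as body. -/
structure HornRule (α : Type) where
  head : Lit α
  body : List (LConstraint α)

/-- Satisfaction of a set of Horn rules by an arbitrary set of literals. -/
def hornSat {α : Type} (Z : Set (Lit α)) (P : Set (HornRule α)) : Prop :=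
  ∀ r ∈ P, (∀ C ∈ r.body, C.sat Z) → r.head ∈ Z

/-- The deductive closure of a set of Horn rules: its unique minimal satisfying
set of literals (the intersection of all satisfying sets). -/
def cl {α : Type} (P : Set (HornRule α)) : Set (Lit α) :=
  ⋂₀ {Z : Set (Lit α) | hornSat Z P}

/-- The sum of the weights of the negative entries of `S` satisfied by `Z`. -/
noncomputable def negSatWeight {α : Type} (Z : Set (Lit α)) (S : List (RElem α × ℝ)) : ℝ :=
  (S.map fun p => if p.1.isNegB = true ∧ p.1.sat Z then p.2 else 0).sum

/-- The reduct `(L ≤ S)^Z` of a lower-bound constraint: drop the negative entries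
of `S` and decrease `L` by the total weight of the negative entries satisfied by `Z`. -/
noncomputable def LConstraint.reduct {α : Type} (Z : Set (Lit α)) (C : LConstraint α) :
    LConstraint α :=
  ⟨C.L - ((negSatWeight Z C.S : ℝ) : EReal),
   C.S.filter (fun p => !p.1.isNegB),
   fun p hp => C.nonneg p (List.mem_of_mem_filter hp)⟩

/-- The lower-bound part `L ≤ S` of a weight constraint `L ≤ S ≤ U`. -/
def WConstraint.lower {α : Type} (C : WConstraint α) : LConstraint α :=
  ⟨C.L, C.S, C.nonneg⟩

/-- The positive rule elements (as literals) occurring in `S`. -/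
def posElems {α : Type} (S : List (RElem α × ℝ)) : Set (Lit α) :=
  {l : Lit α | ∃ w : ℝ, (RElem.pos l, w) ∈ S}

/-- The reduct `Ω^Z` of a program with weight constraints: for each rule
`L₀≤S₀≤U₀ ← C₁,…,C_n` whose upper bounds are all satisfied by `Z`, the Horn rules
`l ← C₁^Z,…,C_n^Z` for all positive rule elements `l` of `S₀` with `l ∈ Z`. -/
noncomputable def wProgReduct {α : Type} (Z : Set (Lit α)) (Ω : Set (WRule α)) :
    Set (HornRule α) :=
  { r : HornRule α | ∃ R ∈ Ω,
      (∀ C ∈ R.body, (weightSum Z C.S : EReal) ≤ C.U) ∧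
      r.head ∈ posElems R.head.S ∧ r.head ∈ Z ∧
      r.body = R.body.map (fun C => C.lower.reduct Z) }

/-- `Z` is an answer set for the program `Ω` with weight constraints. -/
def WAnswerSet {α : Type} (Z : Set (Lit α)) (Ω : Set (WRule α)) : Prop :=
  LitConsistent Z ∧ wProgSat Z Ω ∧ cl (wProgReduct Z Ω) = Z

/-- Strong equivalence of programs with weight constraints. -/
def WStrongEq {α : Type} (Ω₁ Ω₂ : Set (WRule α)) : Prop :=
  ∀ Ω : Set (WRule α), ∀ Z : Set (Lit α), WAnswerSet Z (Ω₁ ∪ Ω) ↔ WAnswerSet Z (Ω₂ ∪ Ω)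

/-- A rule element as a formula: `l` becomes the literal `l`, `not l` becomes `naf l`. -/
def RElem.toFormula {α : Type} : RElem α → Formula α
  | .pos l => .lit l
  | .neg l => .naf (.lit l)

/-- The translation `[L ≤ S]`: the formula `⟨c₁,…,c_m⟩:{I : L ≤ Σ_{i∈I} wᵢ}`. -/
noncomputable def trLower {α : Type} (L : EReal) (S : List (RElem α × ℝ)) : Formula α :=
  angled (fun i : Fin S.length => (S.get i).1.toFormula)
    (Finset.univ.filter fun I : Finset (Fin S.length) =>
      L ≤ ((∑ i ∈ I, (S.get i).2 : ℝ) : EReal))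

/-- The translation `[S ≤ U]`: the formula `not ⟨c₁,…,c_m⟩:{I : U < Σ_{i∈I} wᵢ}`. -/
noncomputable def trUpper {α : Type} (S : List (RElem α × ℝ)) (U : EReal) : Formula α :=
  .naf (angled (fun i : Fin S.length => (S.get i).1.toFormula)
    (Finset.univ.filter fun I : Finset (Fin S.length) =>
      U < ((∑ i ∈ I, (S.get i).2 : ℝ) : EReal)))

/-- The translation `[L ≤ S ≤ U] = [L ≤ S],[S ≤ U]`. -/
noncomputable def trWC {α : Type} (C : WConstraint α) : Formula α :=
  .conj (trLower C.L C.S) (trUpper C.S C.U)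

/-- The formulas `l ; not l` for the positive rule elements `l` of `S`, in order. -/
def choiceFmls {α : Type} (S : List (RElem α × ℝ)) : List (Formula α) :=
  S.filterMap fun p =>
    match p.1 with
    | RElem.pos l => some (Formula.disj (.lit l) (.naf (.lit l)))
    | RElem.neg _ => none

/-- The translation of a rule with weight constraints `C₀ ← C₁,…,C_n`:
`(l₁; not l₁),…,(l_p; not l_p),[C₀] ← [C₁],…,[C_n]`. -/
noncomputable def trRule {α : Type} (R : WRule α) : NRule α :=
  ⟨bigConj (choiceFmls R.head.S ++ [trWC R.head]), bigConj (R.body.map trWC)⟩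

/-- The translation `[Ω]` of a program with weight constraints. -/
noncomputable def trProg {α : Type} (Ω : Set (WRule α)) : Set (NRule α) :=
  trRule '' Ω

/-- The nondisjunctive translation `[Ω]^{nd}`: each rule `C₀ ← C₁,…,C_n` is replaced
by the rules `l ← not not l, [C₁],…,[C_n]` for all positive rule elements `l` of `C₀`
together with `⊥ ← not [C₀], [C₁],…,[C_n]`. -/
noncomputable def ndTrans {α : Type} (Ω : Set (WRule α)) : Set (NRule α) :=
  { r : NRule α | ∃ R ∈ Ω,
      (∃ l ∈ posElems R.head.S,
        r = ⟨.lit l, bigConj (.naf (.naf (.lit l)) :: R.body.map trWC)⟩) ∨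
      r = ⟨.fbot, bigConj (.naf (trWC R.head) :: R.body.map trWC)⟩ }

/-- Satisfaction by `Y` of the reduct relative to `Z` of a rule element. -/
def esat {α : Type} (Z Y : Set (Lit α)) : RElem α → Prop
  | .pos l => l ∈ Y
  | .neg l => l ∉ Z

noncomputable def gsum {α : Type} (Z Y : Set (Lit α)) (S : List (RElem α × ℝ)) : ℝ :=
  (S.map fun p => if esat Z Y p.1 then p.2 else 0).sum

theorem gsum_self {α : Type} (Z : Set (Lit α)) (S : List (RElem α × ℝ)) :
    gsum Z Z S = weightSum Z S := by
  have : ∀ c : RElem α, esat Z Z c = RElem.sat Z c := by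
    intro c
    cases c <;> rfl
  simp only [gsum, weightSum, this]

theorem gsum_mono {α : Type} {Z Y Y' : Set (Lit α)} (h : Y ⊆ Y') (S : List (RElem α × ℝ))
    (hS : ∀ p ∈ S, (0 : ℝ) ≤ p.2) : gsum Z Y S ≤ gsum Z Y' S := by
  unfold gsum
  apply List.sum_le_sum
  rintro ⟨c, w⟩ hp
  have h0 : 0 ≤ w := hS _ hp
  have hi : esat Z Y c → esat Z Y' c := by
    cases c with
    | neg l => exact id
    | pos l => exact fun a => h a
  by_cases h1 : esat Z Y c
  · simp [h1, hi h1]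
  · by_cases h2 : esat Z Y' c
    · simp [h1, h2, h0]
    · simp [h1, h2]

theorem gsum_eq {α : Type} {Z Y : Set (Lit α)} (h : Y ⊆ Z) (S : List (RElem α × ℝ))
    (hS : ∀ l ∈ posElems S, l ∈ Y ∨ l ∉ Z) : gsum Z Y S = gsum Z Z S := by
  unfold gsum
  congr 1
  apply List.map_congr_left
  rintro ⟨c, w⟩ hp
  have hi : esat Z Y c ↔ esat Z Z c := by
    cases c with
    | neg l => exact Iff.rfl
    | pos l =>
      have h1 := hS l ⟨w, hp⟩
      exact ⟨fun a => h a, fun a => h1.resolve_right (fun b => b a)⟩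
  by_cases h1 : esat Z Z c
  · simp [h1, hi.2 h1]
  · have h2 : ¬ esat Z Y c := fun k => h1 (hi.1 k)
    simp [h1, h2]

theorem gsum_split {α : Type} (Z Y : Set (Lit α)) (S : List (RElem α × ℝ)) :
    gsum Z Y S = weightSum Y (S.filter (fun p => !p.1.isNegB)) + negSatWeight Z S := by
  unfold gsum weightSum negSatWeight
  induction S with
  | nil => simp
  | cons p S ih =>
    obtain ⟨c, w⟩ := p
    cases c with
    | pos l =>
      have hn : (RElem.pos l).isNegB = false := rfl
      have he : esat Z Y (RElem.pos l) = RElem.sat Y (RElem.pos l) := rfl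
      simp only [List.map_cons, List.sum_cons, ih, List.filter_cons, hn, he]
      by_cases h : RElem.sat Y (RElem.pos l)
      · simp [h]; ring
      · simp [h]
    | neg l =>
      have hn : (RElem.neg l).isNegB = true := rfl
      have he : esat Z Y (RElem.neg l) = RElem.sat Z (RElem.neg l) := rfl
      simp only [List.map_cons, List.sum_cons, ih, List.filter_cons, hn, he]
      by_cases h : RElem.sat Z (RElem.neg l)
      · simp [h]; ring
      · simp [h]

theorem reduct_lower_sat {α : Type} (Z Y : Set (Lit α)) (C : WConstraint α) :
    (C.lower.reduct Z).sat Y ↔ C.L ≤ (gsum Z Y C.S : EReal) := by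
  rw [gsum_split]
  unfold LConstraint.sat LConstraint.reduct WConstraint.lower
  simp only [EReal.coe_add]
  rw [EReal.sub_le_iff_le_add (Or.inl (EReal.coe_ne_bot _)) (Or.inl (EReal.coe_ne_top _))]

theorem sat_bigConj {α : Type} (Z Y : Set (Lit α)) (l : List (Formula α)) :
    ((bigConj l).reduct Z).sat Y ↔ ∀ F ∈ l, (F.reduct Z).sat Y := by
  induction l with
  | nil => simp [bigConj, Formula.reduct, Formula.sat]
  | cons a l ih => simp [bigConj, Formula.reduct, Formula.sat, ih]

theorem sat_bigDisj {α : Type} (Z Y : Set (Lit α)) (l : List (Formula α)) :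
    ((bigDisj l).reduct Z).sat Y ↔ ∃ F ∈ l, (F.reduct Z).sat Y := by
  induction l with
  | nil => simp [bigDisj, Formula.reduct, Formula.sat]
  | cons a l ih => simp [bigDisj, Formula.reduct, Formula.sat, ih]

theorem sat_reduct_self {α : Type} (Z : Set (Lit α)) (F : Formula α) :
    (F.reduct Z).sat Z ↔ F.sat Z := by
  induction F with
  | lit l => simp [Formula.reduct]
  | fbot => simp [Formula.reduct]
  | ftop => simp [Formula.reduct]
  | naf F ih => by_cases h : F.sat Z <;> simp [Formula.reduct, Formula.sat, h]
  | conj F G h1 h2 => simp [Formula.reduct, Formula.sat, h1, h2]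
  | disj F G h1 h2 => simp [Formula.reduct, Formula.sat, h1, h2]

theorem sat_naf {α : Type} (Z Y : Set (Lit α)) (F : Formula α) :
    ((Formula.naf F).reduct Z).sat Y ↔ ¬ F.sat Z := by
  by_cases h : F.sat Z <;> simp [Formula.reduct, Formula.sat, h]

theorem sat_elem {α : Type} (Z Y : Set (Lit α)) (c : RElem α) :
    (c.toFormula.reduct Z).sat Y ↔ esat Z Y c := by
  cases c with
  | pos l => simp [RElem.toFormula, esat, Formula.reduct, Formula.sat]
  | neg l => rw [RElem.toFormula, sat_naf]; simp [esat, Formula.sat]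

theorem sat_angled {α : Type} (Z Y : Set (Lit α)) {n : ℕ} (F : Fin n → Formula α)
    (X : Finset (Finset (Fin n))) :
    ((angled F X).reduct Z).sat Y ↔ ∃ I ∈ X, ∀ i ∈ I, ((F i).reduct Z).sat Y := by
  simp [angled, sat_bigDisj, sat_bigConj]

theorem gsum_fin {α : Type} (Z Y : Set (Lit α)) (S : List (RElem α × ℝ)) :
    gsum Z Y S = ∑ i ∈ Finset.univ.filter (fun i : Fin S.length => esat Z Y (S.get i).1),
      (S.get i).2 := by
  rw [Finset.sum_filter]
  unfold gsum
  rw [← List.sum_ofFn]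
  congr 1
  apply List.ext_getElem <;> simp

theorem angled_up {α : Type} (Z Y : Set (Lit α)) (S : List (RElem α × ℝ))
    (hS : ∀ p ∈ S, (0 : ℝ) ≤ p.2) (P : ℝ → Prop) (hP : ∀ a b, a ≤ b → P a → P b)
    (X : Finset (Finset (Fin S.length))) (hX : ∀ I, I ∈ X ↔ P (∑ i ∈ I, (S.get i).2)) :
    ((angled (fun i : Fin S.length => (S.get i).1.toFormula) X).reduct Z).sat Y ↔ P (gsum Z Y S) := by
  rw [sat_angled, gsum_fin]
  simp only [sat_elem, hX]
  constructor
  · rintro ⟨I, hI, h⟩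
    refine hP _ _ ?_ hI
    apply Finset.sum_le_sum_of_subset_of_nonneg
    · intro i hi
      simpa using h i hi
    · intro i _ _
      exact hS _ (List.get_mem _ _)
  · intro h
    exact ⟨_, h, fun i hi => (Finset.mem_filter.1 hi).2⟩

theorem sat_trWC {α : Type} (Z Y : Set (Lit α)) (C : WConstraint α) :
    ((trWC C).reduct Z).sat Y ↔
      C.L ≤ (gsum Z Y C.S : EReal) ∧ (weightSum Z C.S : EReal) ≤ C.U := by
  unfold trWC
  simp only [Formula.reduct.eq_5, Formula.sat]
  apply and_congr
  · exact angled_up Z Y C.S C.nonneg (fun a => C.L ≤ (a : EReal))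
      (fun a b h h1 => h1.trans (EReal.coe_le_coe_iff.2 h)) _ (by simp)
  · unfold trUpper
    rw [sat_naf, ← sat_reduct_self, ← gsum_self, ← not_lt, not_iff_not]
    exact angled_up Z Z C.S C.nonneg (fun a => C.U < (a : EReal))
      (fun a b h h1 => h1.trans_le (EReal.coe_le_coe_iff.2 h)) _ (by simp)

theorem sat_choice {α : Type} (Z Y : Set (Lit α)) (S : List (RElem α × ℝ)) :
    (∀ F ∈ choiceFmls S, (F.reduct Z).sat Y) ↔ ∀ l ∈ posElems S, l ∈ Y ∨ l ∉ Z := by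
  have key : ∀ l : Lit α, ((Formula.disj (.lit l) (.naf (.lit l))).reduct Z).sat Y ↔
      (l ∈ Y ∨ l ∉ Z) := by
    intro l
    by_cases h : l ∈ Z <;> simp [Formula.reduct, Formula.sat, h]
  unfold choiceFmls
  simp only [List.mem_filterMap]
  constructor
  · rintro h l ⟨w, hw⟩
    exact (key l).1 (h _ ⟨_, hw, rfl⟩)
  · rintro h F ⟨⟨c, w⟩, hp, hF⟩
    cases c with
    | neg l => simp at hF
    | pos l =>
      simp only [Option.some.injEq] at hF
      subst hF
      exact (key l).2 (h l ⟨w, hp⟩)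

theorem progSat_tr {α : Type} (Z Y : Set (Lit α)) (Ω : Set (WRule α)) :
    progSat Y (progReduct Z (trProg Ω)) ↔ ∀ R ∈ Ω,
      (∀ C ∈ R.body, C.L ≤ (gsum Z Y C.S : EReal) ∧ (weightSum Z C.S : EReal) ≤ C.U) →
      (∀ l ∈ posElems R.head.S, l ∈ Y ∨ l ∉ Z) ∧
      R.head.L ≤ (gsum Z Y R.head.S : EReal) ∧ (weightSum Z R.head.S : EReal) ≤ R.head.U := by
  unfold progSat progReduct trProg
  simp only [Set.forall_mem_image]
  refine forall₂_congr fun R _ => ?_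
  simp only [trRule, sat_bigConj, List.forall_mem_append, sat_choice, List.forall_mem_map,
    sat_trWC, List.forall_mem_singleton]

theorem hornSat_red {α : Type} (Z Y : Set (Lit α)) (Ω : Set (WRule α)) :
    hornSat Y (wProgReduct Z Ω) ↔ ∀ R ∈ Ω,
      (∀ C ∈ R.body, C.L ≤ (gsum Z Y C.S : EReal) ∧ (weightSum Z C.S : EReal) ≤ C.U) →
      ∀ l ∈ posElems R.head.S, l ∈ Y ∨ l ∉ Z := by
  constructor
  · intro h R hR hb l hl
    by_cases hlZ : l ∈ Z
    · left
      refine h ⟨l, R.body.map (fun C => C.lower.reduct Z)⟩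
        ⟨R, hR, fun C hC => (hb C hC).2, hl, hlZ, rfl⟩ ?_
      simp only [List.forall_mem_map, reduct_lower_sat]
      exact fun C hC => (hb C hC).1
    · exact Or.inr hlZ
  · rintro h ⟨l, b⟩ ⟨R, hR, hu, hl, hlZ, hb⟩ hs
    simp only at hl hlZ hb hs ⊢
    subst hb
    simp only [List.forall_mem_map, reduct_lower_sat] at hs
    exact (h R hR (fun C hC => ⟨hs C hC, hu C hC⟩) l hl).resolve_right (fun k => k hlZ)

theorem gen_theorem {α : Type} (Ω : Set (WRule α)) (Z : Set (Lit α)) (hZ : LitConsistent Z) :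
    WAnswerSet Z Ω ↔ AnswerSet Z (trProg Ω) := by
  have hZZ : progSat Z (progReduct Z (trProg Ω)) ↔ wProgSat Z Ω := by
    rw [progSat_tr]
    simp only [gsum_self]
    refine forall₂_congr fun R _ => ?_
    have : ∀ l ∈ posElems R.head.S, l ∈ Z ∨ l ∉ Z := fun l _ => Classical.em _
    simp only [WConstraint.sat]
    tauto
  have hmono : ∀ Y Y' : Set (Lit α), Y ⊆ Y' → ∀ C : WConstraint α,
      C.L ≤ (gsum Z Y C.S : EReal) → C.L ≤ (gsum Z Y' C.S : EReal) := fun Y Y' h C hC =>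
    hC.trans (EReal.coe_le_coe_iff.2 (gsum_mono h C.S C.nonneg))
  have hY : wProgSat Z Ω → ∀ Y ⊆ Z, (progSat Y (progReduct Z (trProg Ω)) ↔
      hornSat Y (wProgReduct Z Ω)) := by
    intro hw Y hYZ
    rw [progSat_tr, hornSat_red]
    constructor
    · intro h R hR hb
      exact (h R hR hb).1
    · intro h R hR hb
      have h1 := h R hR hb
      refine ⟨h1, ?_⟩
      rw [gsum_eq hYZ _ h1, gsum_self]
      refine hw R hR fun C hC => ⟨?_, (hb C hC).2⟩
      rw [← gsum_self]
      exact hmono Y Z hYZ C (hb C hC).1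
  have hself : hornSat Z (wProgReduct Z Ω) := by
    rw [hornSat_red]
    exact fun R _ _ l _ => Classical.em _
  have hclZ : cl (wProgReduct Z Ω) ⊆ Z := Set.sInter_subset_of_mem hself
  have hcl : hornSat (cl (wProgReduct Z Ω)) (wProgReduct Z Ω) := by
    rw [hornSat_red]
    intro R hR hb l hl
    by_cases hlZ : l ∈ Z
    · left
      refine Set.mem_sInter.2 fun Y hYs => ?_
      have hYs' : hornSat Y (wProgReduct Z Ω) := hYs
      refine ((hornSat_red Z Y Ω).1 hYs' R hR (fun C hC => ⟨?_, (hb C hC).2⟩) l hl).resolve_right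
        (fun k => k hlZ)
      exact hmono _ Y (Set.sInter_subset_of_mem hYs) C (hb C hC).1
    · exact Or.inr hlZ
  constructor
  · rintro ⟨_, hw, hc⟩
    refine ⟨hZ, hZZ.2 hw, fun Y _ hp hYZ => hYZ.antisymm ?_⟩
    have := (hY hw Y hYZ).1 hp
    rw [← hc]
    exact Set.sInter_subset_of_mem this
  · rintro ⟨_, hp, hm⟩
    have hw := hZZ.1 hp
    refine ⟨hZ, hw, hm _ ?_ ((hY hw _ hclZ).2 hcl) hclZ⟩
    exact fun a ha => hZ a ⟨hclZ ha.1, hclZ ha.2⟩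

/-- Theorem 1: a consistent set `Z` of literals is an answer set for a program `Ω`
with weight constraints iff `Z` is an answer set for its translation `[Ω]`. -/
theorem theorem_1 (Ω : Set (WRule ℕ)) (Z : Set (Lit ℕ)) (hZ : LitConsistent Z) :
    WAnswerSet Z Ω ↔ AnswerSet Z (trProg Ω) := by
  exact gen_theorem Ω Z hZ
end

section
/- For any program Ω with weight constraints, the map Z ↦ Z ∖ Q_Ω (removing from Z the atoms belonging to Q_Ω) is a bijection from the set of answer sets of the nonnested translation [Ω]^{nn} onto the set of answer sets of Ω. -/
open Classical

/-- The atoms occurring in a formula. -/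
def Formula.atoms {α : Type} : Formula α → Set α
  | .lit l => {l.atom}
  | .fbot => ∅
  | .ftop => ∅
  | .naf F => F.atoms
  | .conj F G => F.atoms ∪ G.atoms
  | .disj F G => F.atoms ∪ G.atoms

/-- The atom `a` occurs in the program `P`. -/
def atomOccurs {α : Type} (a : α) (P : Set (NRule α)) : Prop :=
  ∃ r ∈ P, a ∈ r.head.atoms ∨ a ∈ r.body.atoms

/-- The extended vocabulary for the nonnested translation: the original (base) atoms
together with the fresh negation atoms `q_{not l}` and weight atoms `q_{w≤S}`, `q_{w<S}`. -/
inductive AtomX where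
  | base : ℕ → AtomX
  | qnot : Lit ℕ → AtomX
  | qle : EReal → List (RElem ℕ × ℝ) → AtomX
  | qlt : EReal → List (RElem ℕ × ℝ) → AtomX

/-- An atom viewed as a formula. -/
def atomFml (a : AtomX) : Formula AtomX := .lit (.pos a)

/-- A rule element over the base atoms, as a formula over the extended vocabulary. -/
def reFmlX : RElem ℕ → Formula AtomX
  | .pos l => .lit (l.map AtomX.base)
  | .neg l => .naf (.lit (l.map AtomX.base))

/-- The total weight `w₁ + … + w_m` of `S`. -/
def sumW (S : List (RElem ℕ × ℝ)) : ℝ := (S.map Prod.snd).sum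

/-- A program is closed if it contains the defining rules for every weight atom
occurring in it: for `q_{w≤S}`, the fact `q_{w≤S}` if `w ≤ 0`, and the rules
`q_{w≤S} ← q_{w≤S'}` and `q_{w≤S} ← c_m, q_{w−w_m≤S'}` if `0 < w ≤ w₁+…+w_m`
(where `S = S' ++ [(c_m,w_m)]`); analogously for `q_{w<S}`. -/
def ClosedProg (P : Set (NRule AtomX)) : Prop :=
  (∀ (w : EReal) (S : List (RElem ℕ × ℝ)), atomOccurs (AtomX.qle w S) P →
    (w ≤ 0 → (⟨atomFml (.qle w S), .ftop⟩ : NRule AtomX) ∈ P) ∧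
    (0 < w → w ≤ ((sumW S : ℝ) : EReal) →
      ∃ (S' : List (RElem ℕ × ℝ)) (c : RElem ℕ) (wm : ℝ),
        S = S' ++ [(c, wm)] ∧
        (⟨atomFml (.qle w S), atomFml (.qle w S')⟩ : NRule AtomX) ∈ P ∧
        (⟨atomFml (.qle w S),
          .conj (reFmlX c) (atomFml (.qle (w - ((wm : ℝ) : EReal)) S'))⟩ :
            NRule AtomX) ∈ P)) ∧
  (∀ (w : EReal) (S : List (RElem ℕ × ℝ)), atomOccurs (AtomX.qlt w S) P →
    (w < 0 → (⟨atomFml (.qlt w S), .ftop⟩ : NRule AtomX) ∈ P) ∧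
    (0 ≤ w → w < ((sumW S : ℝ) : EReal) →
      ∃ (S' : List (RElem ℕ × ℝ)) (c : RElem ℕ) (wm : ℝ),
        S = S' ++ [(c, wm)] ∧
        (⟨atomFml (.qlt w S), atomFml (.qlt w S')⟩ : NRule AtomX) ∈ P ∧
        (⟨atomFml (.qlt w S),
          .conj (reFmlX c) (atomFml (.qlt (w - ((wm : ℝ) : EReal)) S'))⟩ :
            NRule AtomX) ∈ P))

/-- The nonnested translation `[L ≤ S ≤ U]^{nn} = q_{L≤S}, not q_{U<S}`. -/
def nnWC (C : WConstraint ℕ) : Formula AtomX :=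
  .conj (atomFml (.qle C.L C.S)) (.naf (atomFml (.qlt C.U C.S)))

/-- The basic rules of the nonnested translation: for every rule
`L₀≤S₀≤U₀ ← C₁,…,C_n` of `Ω`, the rules `q_{not l} ← not l` and
`l ← not q_{not l}, [C₁]^{nn},…,[C_n]^{nn}` for each positive rule element `l` of `S₀`,
and the rules `⊥ ← not q_{L₀≤S₀}, [C₁]^{nn},…,[C_n]^{nn}` and
`⊥ ← q_{U₀<S₀}, [C₁]^{nn},…,[C_n]^{nn}`. -/
def nnBase (Ω : Set (WRule ℕ)) : Set (NRule AtomX) :=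
  { r : NRule AtomX | ∃ R ∈ Ω,
      (∃ l ∈ posElems R.head.S,
        r = ⟨atomFml (.qnot l), .naf (.lit (l.map AtomX.base))⟩ ∨
        r = ⟨.lit (l.map AtomX.base),
             bigConj (.naf (atomFml (.qnot l)) :: R.body.map nnWC)⟩) ∨
      r = ⟨.fbot,
           bigConj (.naf (atomFml (.qle R.head.L R.head.S)) :: R.body.map nnWC)⟩ ∨
      r = ⟨.fbot,
           bigConj (atomFml (.qlt R.head.U R.head.S) :: R.body.map nnWC)⟩ }

/-- The nonnested translation `[Ω]^{nn}`: the smallest closed program containing the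
basic rules. -/
def nnTrans (Ω : Set (WRule ℕ)) : Set (NRule AtomX) :=
  ⋂₀ {P : Set (NRule AtomX) | nnBase Ω ⊆ P ∧ ClosedProg P}

/-- The new (fresh) atoms: negation atoms and weight atoms. -/
def AtomX.isNew : AtomX → Prop
  | .base _ => False
  | _ => True

/-- `Q_Ω`: the set of new atoms occurring in `[Ω]^{nn}`. -/
def QSet (Ω : Set (WRule ℕ)) : Set AtomX :=
  {a : AtomX | a.isNew ∧ atomOccurs a (nnTrans Ω)}


namespace NNProof

/-- Satisfaction of the reduct. -/
def HS {α : Type} (Y Z : Set (Lit α)) (F : Formula α) : Prop := (F.reduct Z).sat Y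

section HSlemmas
variable {α : Type} {Y Y' Z : Set (Lit α)}

theorem HS_lit (l : Lit α) : HS Y Z (.lit l) ↔ l ∈ Y := Iff.rfl
theorem HS_bot : HS Y Z .fbot ↔ False := Iff.rfl
theorem HS_top : HS Y Z .ftop ↔ True := Iff.rfl
theorem HS_conj (F G : Formula α) : HS Y Z (.conj F G) ↔ HS Y Z F ∧ HS Y Z G := Iff.rfl
theorem HS_naf (F : Formula α) : HS Y Z (.naf F) ↔ ¬ F.sat Z := by
  unfold HS Formula.reduct
  by_cases h : F.sat Z <;> simp [h, Formula.sat]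

theorem HS_mono (h : Y ⊆ Y') (F : Formula α) : HS Y Z F → HS Y' Z F := by
  induction F with
  | lit l => exact fun x => h x
  | fbot => exact id
  | ftop => exact id
  | naf F _ => simp only [HS_naf]; exact id
  | conj F G hF hG => exact fun x => ⟨hF x.1, hG x.2⟩
  | disj F G hF hG => exact fun x => x.elim (fun y => Or.inl (hF y)) (fun y => Or.inr (hG y))

theorem HS_bigConj (Fs : List (Formula α)) : HS Y Z (bigConj Fs) ↔ ∀ F ∈ Fs, HS Y Z F := by
  induction Fs with
  | nil => simp [bigConj, HS_top]
  | cons F Fs ih => simp [bigConj, HS_conj, ih]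

theorem progSat_reduct (P : Set (NRule α)) :
    progSat Y (progReduct Z P) ↔ ∀ r ∈ P, HS Y Z r.body → HS Y Z r.head := by
  simp [progSat, progReduct, HS]

theorem atoms_bigConj (Fs : List (Formula α)) (F : Formula α) (hF : F ∈ Fs) (a : α)
    (ha : a ∈ F.atoms) : a ∈ (bigConj Fs).atoms := by
  induction Fs with
  | nil => simp at hF
  | cons G Fs ih =>
    rcases List.mem_cons.1 hF with rfl | h
    · exact Or.inl ha
    · exact Or.inr (ih h)

theorem atoms_bigConj' (Fs : List (Formula α)) (a : α)
    (ha : a ∈ (bigConj Fs).atoms) : ∃ F ∈ Fs, a ∈ F.atoms := by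
  induction Fs with
  | nil => exact ha.elim
  | cons G Fs ih =>
    rcases ha with h | h
    · exact ⟨G, by simp, h⟩
    · obtain ⟨F, h1, h2⟩ := ih h
      exact ⟨F, by simp [h1], h2⟩
end HSlemmas

/-- Nonnegative weights. -/
def NonN (S : List (RElem ℕ × ℝ)) : Prop := ∀ p ∈ S, (0 : ℝ) ≤ p.2

/-- The weight rules. -/
inductive WR : NRule AtomX → Prop
  | le0 (w S) : NonN S → w ≤ 0 → WR ⟨atomFml (.qle w S), .ftop⟩
  | le1 (w S c wm) : NonN (S ++ [(c, wm)]) →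
      WR ⟨atomFml (.qle w (S ++ [(c, wm)])), atomFml (.qle w S)⟩
  | le2 (w : EReal) (S c) (wm : ℝ) : NonN (S ++ [(c, wm)]) →
      WR ⟨atomFml (.qle w (S ++ [(c, wm)])),
        .conj (reFmlX c) (atomFml (.qle (w - ((wm : ℝ) : EReal)) S))⟩
  | lt0 (w S) : NonN S → w < 0 → WR ⟨atomFml (.qlt w S), .ftop⟩
  | lt1 (w S c wm) : NonN (S ++ [(c, wm)]) →
      WR ⟨atomFml (.qlt w (S ++ [(c, wm)])), atomFml (.qlt w S)⟩
  | lt2 (w : EReal) (S c) (wm : ℝ) : NonN (S ++ [(c, wm)]) →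
      WR ⟨atomFml (.qlt w (S ++ [(c, wm)])),
        .conj (reFmlX c) (atomFml (.qlt (w - ((wm : ℝ) : EReal)) S))⟩

/-- Good atoms: weight atoms have nonnegative weights. -/
def Good (Ω : Set (WRule ℕ)) : AtomX → Prop
  | .base _ => True
  | .qnot l => ∃ R ∈ Ω, l ∈ posElems R.head.S
  | .qle _ S => NonN S
  | .qlt _ S => NonN S

theorem good_base (Ω : Set (WRule ℕ)) (l : Lit ℕ) : Good Ω (l.map AtomX.base).atom := by
  cases l <;> trivial

theorem good_nnWC (Ω : Set (WRule ℕ)) (C : WConstraint ℕ) (a : AtomX) (ha : a ∈ (nnWC C).atoms) :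
    Good Ω a := by
  rcases ha with h | h
  · cases h; exact C.nonneg
  · cases h; exact C.nonneg

theorem good_nnBase (Ω : Set (WRule ℕ)) (r : NRule AtomX) (hr : r ∈ nnBase Ω) (a : AtomX)
    (ha : a ∈ r.head.atoms ∨ a ∈ r.body.atoms) : Good Ω a := by
  have key : ∀ (F : Formula AtomX) (B : List (WConstraint ℕ)), (∀ a ∈ F.atoms, Good Ω a) →
      a ∈ (bigConj (F :: B.map nnWC)).atoms → Good Ω a := by
    intro F B hF h
    obtain ⟨G, hG, hGa⟩ := atoms_bigConj' _ _ h
    rcases List.mem_cons.1 hG with rfl | hG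
    · exact hF _ hGa
    · obtain ⟨C, _, rfl⟩ := List.mem_map.1 hG
      exact good_nnWC Ω C a hGa
  obtain ⟨R, hR, ⟨l, hl, rfl | rfl⟩ | rfl | rfl⟩ := hr
  · rcases ha with h | h
    · cases h; exact ⟨R, hR, hl⟩
    · cases h; exact good_base Ω l
  · rcases ha with h | h
    · cases h; exact good_base Ω l
    · refine key _ _ ?_ h
      intro a h; cases h; exact ⟨R, hR, hl⟩
  · rcases ha with h | h
    · exact h.elim
    · refine key _ _ ?_ h
      intro a h; cases h; exact R.head.nonneg
  · rcases ha with h | h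
    · exact h.elim
    · refine key _ _ ?_ h
      intro a h; cases h; exact R.head.nonneg

theorem NonN_left {S : List (RElem ℕ × ℝ)} {q} (h : NonN (S ++ [q])) : NonN S :=
  fun p hp => h p (by simp [hp])

theorem good_re (Ω : Set (WRule ℕ)) (c : RElem ℕ) (a : AtomX) (ha : a ∈ (reFmlX c).atoms) :
    Good Ω a := by
  cases c <;> (cases ha; exact good_base Ω _)

theorem good_WR (Ω : Set (WRule ℕ)) (r : NRule AtomX) (hr : WR r) (a : AtomX)
    (ha : a ∈ r.head.atoms ∨ a ∈ r.body.atoms) : Good Ω a := by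
  cases hr with
  | le0 w S h _ => rcases ha with h | h <;> cases h; assumption
  | le1 w S c wm h => rcases ha with h | h <;> cases h; exacts [h, NonN_left h]
  | le2 w S c wm h =>
    rcases ha with h | h | h
    · cases h; assumption
    · exact good_re Ω c a h
    · cases h; exact NonN_left h
  | lt0 w S h _ => rcases ha with h | h <;> cases h; assumption
  | lt1 w S c wm h => rcases ha with h | h <;> cases h; exacts [h, NonN_left h]
  | lt2 w S c wm h =>
    rcases ha with h | h | h
    · cases h; assumption
    · exact good_re Ω c a h
    · cases h; exact NonN_left h

theorem sumW_pos_split (S : List (RElem ℕ × ℝ)) (h : (0 : EReal) < ((sumW S : ℝ) : EReal)) :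
    ∃ (S' : List (RElem ℕ × ℝ)) (c : RElem ℕ) (wm : ℝ), S = S' ++ [(c, wm)] := by
  rcases List.eq_nil_or_concat S with rfl | ⟨S', ⟨c, wm⟩, rfl⟩
  · simp [sumW] at h
  · exact ⟨S', c, wm, by simp⟩

theorem nnBase_sub (Ω : Set (WRule ℕ)) : nnBase Ω ⊆ nnTrans Ω :=
  fun _ hr _ hP => hP.1 hr

theorem occ_mono {P Q : Set (NRule AtomX)} (h : P ⊆ Q) {a} : atomOccurs a P → atomOccurs a Q :=
  fun ⟨r, hr, x⟩ => ⟨r, h hr, x⟩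

theorem nn_closed (Ω : Set (WRule ℕ)) : ClosedProg (nnTrans Ω) := by
  constructor
  · intro w S ho
    refine ⟨fun hw P hP => (hP.2.1 w S (occ_mono (Set.sInter_subset_of_mem hP) ho)).1 hw, ?_⟩
    intro h0 h1
    obtain ⟨S', c, wm, rfl⟩ := sumW_pos_split S (h0.trans_le h1)
    refine ⟨S', c, wm, rfl, ?_, ?_⟩ <;>
    · intro P hP
      obtain ⟨S'', c', wm', he, h2, h3⟩ :=
        (hP.2.1 w _ (occ_mono (Set.sInter_subset_of_mem hP) ho)).2 h0 h1
      obtain ⟨rfl, he2⟩ := List.append_inj' he rfl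
      cases he2
      assumption
  · intro w S ho
    refine ⟨fun hw P hP => (hP.2.2 w S (occ_mono (Set.sInter_subset_of_mem hP) ho)).1 hw, ?_⟩
    intro h0 h1
    obtain ⟨S', c, wm, rfl⟩ := sumW_pos_split S (h0.trans_lt h1)
    refine ⟨S', c, wm, rfl, ?_, ?_⟩ <;>
    · intro P hP
      obtain ⟨S'', c', wm', he, h2, h3⟩ :=
        (hP.2.2 w _ (occ_mono (Set.sInter_subset_of_mem hP) ho)).2 h0 h1
      obtain ⟨rfl, he2⟩ := List.append_inj' he rfl
      cases he2
      assumption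

theorem nn_cases (Ω : Set (WRule ℕ)) (r : NRule AtomX) (hr : r ∈ nnTrans Ω) :
    r ∈ nnBase Ω ∨ WR r := by
  have hg : ∀ a, atomOccurs a {r | r ∈ nnBase Ω ∨ WR r} → Good Ω a := by
    rintro a ⟨r, h | h, ha⟩
    · exact good_nnBase Ω r h a ha
    · exact good_WR Ω r h a ha
  refine hr {r | r ∈ nnBase Ω ∨ WR r} ⟨fun r h => Or.inl h, ?_, ?_⟩
  · intro w S ho
    have hS : NonN S := hg _ ho
    refine ⟨fun hw => Or.inr (.le0 _ _ hS hw), fun h0 h1 => ?_⟩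
    obtain ⟨S', c, wm, rfl⟩ := sumW_pos_split S (h0.trans_le h1)
    exact ⟨S', c, wm, rfl, Or.inr (.le1 _ _ _ _ hS), Or.inr (.le2 _ _ _ _ hS)⟩
  · intro w S ho
    have hS : NonN S := hg _ ho
    refine ⟨fun hw => Or.inr (.lt0 _ _ hS hw), fun h0 h1 => ?_⟩
    obtain ⟨S', c, wm, rfl⟩ := sumW_pos_split S (h0.trans_lt h1)
    exact ⟨S', c, wm, rfl, Or.inr (.lt1 _ _ _ _ hS), Or.inr (.lt2 _ _ _ _ hS)⟩

theorem occ_good (Ω : Set (WRule ℕ)) (a) (h : atomOccurs a (nnTrans Ω)) : Good Ω a := by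
  obtain ⟨r, hr, ha⟩ := h
  rcases nn_cases Ω r hr with h | h
  · exact good_nnBase Ω r h a ha
  · exact good_WR Ω r h a ha

/-- Two-set satisfaction of rule elements. -/
def sat2 (Y Z : Set (Lit ℕ)) : RElem ℕ → Prop
  | .pos l => l ∈ Y
  | .neg l => l ∉ Z

/-- Two-set weight sum. -/
noncomputable def wsum (Y Z : Set (Lit ℕ)) (S : List (RElem ℕ × ℝ)) : ℝ :=
  (S.map fun p => if sat2 Y Z p.1 then p.2 else 0).sum

theorem wsum_self (Z : Set (Lit ℕ)) (S) : wsum Z Z S = weightSum Z S := by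
  unfold wsum weightSum
  congr 1
  refine List.map_congr_left fun p _ => ?_
  rcases p with ⟨l | l, w⟩ <;> rfl

theorem wsum_append (Y Z : Set (Lit ℕ)) (S c wm) :
    wsum Y Z (S ++ [(c, wm)]) = wsum Y Z S + if sat2 Y Z c then wm else 0 := by
  simp [wsum]

theorem wsum_mono {Y Y' Z : Set (Lit ℕ)} (h : Y ⊆ Y') {S} (hS : NonN S) :
    wsum Y Z S ≤ wsum Y' Z S := by
  unfold wsum
  refine List.sum_le_sum fun p hp => ?_
  have := hS p hp
  rcases p with ⟨l | l, w⟩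
  · simp only [sat2]
    by_cases h1 : l ∈ Y
    · simp [h1, h h1]
    · simp only [h1, if_false]
      by_cases h2 : l ∈ Y'
      · simpa [h2] using this
      · simp [h2]
  · exact le_rfl

theorem wsum_le_sumW (Y Z : Set (Lit ℕ)) {S} (hS : NonN S) : wsum Y Z S ≤ sumW S := by
  unfold wsum sumW
  refine List.sum_le_sum fun p hp => ?_
  have := hS p hp
  split_ifs
  exacts [le_rfl, this]

theorem wsum_nonneg (Y Z : Set (Lit ℕ)) {S} (hS : NonN S) : 0 ≤ wsum Y Z S := by
  unfold wsum
  refine List.sum_nonneg fun x hx => ?_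
  obtain ⟨p, hp, rfl⟩ := List.mem_map.1 hx
  have := hS p hp
  split_ifs
  exacts [this, le_rfl]

theorem wsum_reduct (Y Z : Set (Lit ℕ)) (S) :
    wsum Y Z S = weightSum Y (S.filter (fun p => !p.1.isNegB)) + negSatWeight Z S := by
  unfold wsum weightSum negSatWeight
  induction S with
  | nil => simp
  | cons p S ih =>
    rcases p with ⟨l | l, w⟩
    · have h1 : List.filter (fun p : RElem ℕ × ℝ => !p.1.isNegB) ((RElem.pos l, w) :: S) =
          (RElem.pos l, w) :: List.filter (fun p => !p.1.isNegB) S := rfl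
      rw [h1]
      simp only [List.map_cons, List.sum_cons, ih]
      have h2 : ¬ ((RElem.pos l).isNegB = true ∧ (RElem.pos l).sat Z) := fun h => by cases h.1
      have h3 : sat2 Y Z (RElem.pos l) ↔ (RElem.pos l).sat Y := Iff.rfl
      rw [if_neg h2]
      simp only [h3]
      ring
    · have h1 : List.filter (fun p : RElem ℕ × ℝ => !p.1.isNegB) ((RElem.neg l, w) :: S) =
          List.filter (fun p => !p.1.isNegB) S := rfl
      rw [h1]
      simp only [List.map_cons, List.sum_cons, ih]
      have h3 : sat2 Y Z (RElem.neg l) ↔ ((RElem.neg l).isNegB = true ∧ (RElem.neg l).sat Z) :=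
        ⟨fun h => ⟨rfl, h⟩, fun h => h.2⟩
      simp only [h3]
      ring

theorem le_sub_iff (w : EReal) (a b : ℝ) : w - (a : EReal) ≤ b ↔ w ≤ ((b + a : ℝ) : EReal) := by
  rw [EReal.coe_add]
  exact EReal.sub_le_iff_le_add (by simp) (by simp)

theorem lt_sub_iff (w : EReal) (a b : ℝ) : w - (a : EReal) < b ↔ w < ((b + a : ℝ) : EReal) := by
  induction w with
  | bot => simp [EReal.bot_lt_coe, -EReal.coe_add]
  | top => simp [-EReal.coe_add]
  | coe x =>
    rw [← EReal.coe_sub, EReal.coe_lt_coe_iff, EReal.coe_lt_coe_iff, sub_lt_iff_lt_add]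

theorem reduct_sat (Y Z : Set (Lit ℕ)) (C : WConstraint ℕ) :
    (C.lower.reduct Z).sat Y ↔ C.L ≤ (wsum Y Z C.S : EReal) := by
  rw [wsum_reduct, ← le_sub_iff]; rfl

/-- The extension of a set of base literals by the new atoms. -/
def Ext (Ω : Set (WRule ℕ)) (Y Z : Set (Lit ℕ)) : Set (Lit AtomX) :=
  fun x => match x with
  | .pos (.base a) => .pos a ∈ Y
  | .neg (.base a) => .neg a ∈ Y
  | .pos (.qnot l) => atomOccurs (.qnot l) (nnTrans Ω) ∧ l ∉ Z
  | .pos (.qle w S) => atomOccurs (.qle w S) (nnTrans Ω) ∧ w ≤ (wsum Y Z S : EReal)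
  | .pos (.qlt w S) => atomOccurs (.qlt w S) (nnTrans Ω) ∧ w < (wsum Y Z S : EReal)
  | .neg _ => False

section ExtL
variable {Ω : Set (WRule ℕ)} {Y Z : Set (Lit ℕ)}

theorem ext_base (l : Lit ℕ) : l.map AtomX.base ∈ Ext Ω Y Z ↔ l ∈ Y := by cases l <;> rfl
theorem ext_qnot (l) : Lit.pos (.qnot l) ∈ Ext Ω Y Z ↔
    atomOccurs (.qnot l) (nnTrans Ω) ∧ l ∉ Z := Iff.rfl
theorem ext_qle (w S) : Lit.pos (.qle w S) ∈ Ext Ω Y Z ↔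
    atomOccurs (.qle w S) (nnTrans Ω) ∧ w ≤ (wsum Y Z S : EReal) := Iff.rfl
theorem ext_qlt (w S) : Lit.pos (.qlt w S) ∈ Ext Ω Y Z ↔
    atomOccurs (.qlt w S) (nnTrans Ω) ∧ w < (wsum Y Z S : EReal) := Iff.rfl

theorem ext_mono {Y' : Set (Lit ℕ)} (h : Y ⊆ Y') : Ext Ω Y Z ⊆ Ext Ω Y' Z := by
  rintro ((a | l | ⟨w, S⟩ | ⟨w, S⟩) | (a | l | ⟨w, S⟩ | ⟨w, S⟩)) hx
  · exact h hx
  · exact hx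
  · exact ⟨hx.1, hx.2.trans (EReal.coe_le_coe_iff.2 (wsum_mono h (occ_good Ω _ hx.1)))⟩
  · exact ⟨hx.1, hx.2.trans_le (EReal.coe_le_coe_iff.2 (wsum_mono h (occ_good Ω _ hx.1)))⟩
  · exact h hx
  all_goals exact hx

theorem HS_re {A B : Set (Lit AtomX)} (c : RElem ℕ) : HS A B (reFmlX c) ↔
    sat2 {l | l.map AtomX.base ∈ A} {l | l.map AtomX.base ∈ B} c := by
  cases c with
  | pos l => exact Iff.rfl
  | neg l => exact HS_naf _

theorem occ_head {P : Set (NRule AtomX)} {a F} (h : (⟨atomFml a, F⟩ : NRule AtomX) ∈ P) :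
    atomOccurs a P := ⟨_, h, Or.inl rfl⟩

/-- Any model of the reduct contains the extension. -/
theorem ext_sub {A B : Set (Lit AtomX)} (h : ∀ r ∈ nnTrans Ω, HS A B r.body → HS A B r.head)
    (hY : Y = {l | l.map AtomX.base ∈ A}) (hZ : Z = {l | l.map AtomX.base ∈ B}) :
    Ext Ω Y Z ⊆ A := by
  have hle : ∀ (S : List (RElem ℕ × ℝ)) (w : EReal), atomOccurs (.qle w S) (nnTrans Ω) →
      w ≤ (wsum Y Z S : EReal) → Lit.pos (.qle w S) ∈ A := by
    intro S
    induction S using List.reverseRecOn with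
    | nil =>
      intro w ho hw
      exact h _ (((nn_closed Ω).1 _ _ ho).1 (by simpa [wsum] using hw)) trivial
    | append_singleton S p ih =>
      obtain ⟨c, wm⟩ := p
      intro w ho hw
      rcases le_or_gt w 0 with h0 | h0
      · exact h _ (((nn_closed Ω).1 _ _ ho).1 h0) trivial
      obtain ⟨S'', c', wm', he, h2, h3⟩ := ((nn_closed Ω).1 _ _ ho).2 h0
        (hw.trans (EReal.coe_le_coe_iff.2 (wsum_le_sumW _ _ (occ_good Ω _ ho))))
      obtain ⟨rfl, he2⟩ := List.append_inj' he rfl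
      cases he2
      rw [wsum_append] at hw
      by_cases hc : sat2 Y Z c
      · rw [if_pos hc, ← le_sub_iff] at hw
        refine h _ h3 ⟨?_, ih _ ⟨_, h3, Or.inr (Or.inr rfl)⟩ hw⟩
        refine (HS_re c).2 ?_
        rw [← hY, ← hZ]; exact hc
      · rw [if_neg hc, add_zero] at hw
        exact h _ h2 (ih _ ⟨_, h2, Or.inr rfl⟩ hw)
  have hlt : ∀ (S : List (RElem ℕ × ℝ)) (w : EReal), atomOccurs (.qlt w S) (nnTrans Ω) →
      w < (wsum Y Z S : EReal) → Lit.pos (.qlt w S) ∈ A := by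
    intro S
    induction S using List.reverseRecOn with
    | nil =>
      intro w ho hw
      exact h _ (((nn_closed Ω).2 _ _ ho).1 (by simpa [wsum] using hw)) trivial
    | append_singleton S p ih =>
      obtain ⟨c, wm⟩ := p
      intro w ho hw
      rcases lt_or_ge w 0 with h0 | h0
      · exact h _ (((nn_closed Ω).2 _ _ ho).1 h0) trivial
      obtain ⟨S'', c', wm', he, h2, h3⟩ := ((nn_closed Ω).2 _ _ ho).2 h0
        (hw.trans_le (EReal.coe_le_coe_iff.2 (wsum_le_sumW _ _ (occ_good Ω _ ho))))
      obtain ⟨rfl, he2⟩ := List.append_inj' he rfl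
      cases he2
      rw [wsum_append] at hw
      by_cases hc : sat2 Y Z c
      · rw [if_pos hc, ← lt_sub_iff] at hw
        refine h _ h3 ⟨?_, ih _ ⟨_, h3, Or.inr (Or.inr rfl)⟩ hw⟩
        refine (HS_re c).2 ?_
        rw [← hY, ← hZ]; exact hc
      · rw [if_neg hc, add_zero] at hw
        exact h _ h2 (ih _ ⟨_, h2, Or.inr rfl⟩ hw)
  rintro ((a | l | ⟨w, S⟩ | ⟨w, S⟩) | (a | l | ⟨w, S⟩ | ⟨w, S⟩)) hx
  · have : Lit.pos a ∈ Y := hx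
    rw [hY] at this; exact this
  · obtain ⟨R, hR, hl⟩ := occ_good Ω _ hx.1
    refine h _ (nnBase_sub Ω ⟨R, hR, Or.inl ⟨l, hl, Or.inl rfl⟩⟩) ((HS_naf _).2 ?_)
    have := hx.2
    rw [hZ] at this; exact this
  · exact hle _ _ hx.1 hx.2
  · exact hlt _ _ hx.1 hx.2
  · have : Lit.neg a ∈ Y := hx
    rw [hY] at this; exact this
  all_goals exact hx.elim

/-- The weight rules are satisfied by extensions, in a form suitable for intersections. -/
theorem ext_WR {B : Set (Lit AtomX)} (hZ : Z = {l | l.map AtomX.base ∈ B}) (r : NRule AtomX)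
    (hr : r ∈ nnTrans Ω) (hw : WR r) (hb : HS (Ext Ω Y Z) B r.body) :
    HS (Ext Ω Y Z) B r.head := by
  have hYY : {l | l.map AtomX.base ∈ Ext Ω Y Z} = Y := by ext l; exact ext_base l
  cases hw with
  | le0 w S hS hw =>
    exact ⟨occ_head hr, hw.trans (by exact_mod_cast wsum_nonneg Y Z hS)⟩
  | lt0 w S hS hw =>
    exact ⟨occ_head hr, hw.trans_le (by exact_mod_cast wsum_nonneg Y Z hS)⟩
  | le1 w S c wm hS =>
    refine ⟨occ_head hr, hb.2.trans (EReal.coe_le_coe_iff.2 ?_)⟩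
    have : 0 ≤ wm := hS (c, wm) (by simp)
    rw [wsum_append]; split_ifs <;> linarith
  | lt1 w S c wm hS =>
    refine ⟨occ_head hr, hb.2.trans_le (EReal.coe_le_coe_iff.2 ?_)⟩
    have : 0 ≤ wm := hS (c, wm) (by simp)
    rw [wsum_append]; split_ifs <;> linarith
  | le2 w S c wm hS =>
    refine ⟨occ_head hr, ?_⟩
    have hc := (HS_re c).1 hb.1
    rw [hYY, ← hZ] at hc
    rw [wsum_append, if_pos hc, ← le_sub_iff]
    exact hb.2.2
  | lt2 w S c wm hS =>
    refine ⟨occ_head hr, ?_⟩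
    have hc := (HS_re c).1 hb.1
    rw [hYY, ← hZ] at hc
    rw [wsum_append, if_pos hc, ← lt_sub_iff]
    exact hb.2.2

theorem rule_l {R} (hR : R ∈ Ω) {l} (hl : l ∈ posElems R.head.S) :
    (⟨.lit (l.map AtomX.base), bigConj (.naf (atomFml (.qnot l)) :: R.body.map nnWC)⟩ :
      NRule AtomX) ∈ nnTrans Ω := nnBase_sub Ω ⟨R, hR, Or.inl ⟨l, hl, Or.inr rfl⟩⟩
theorem rule_L {R} (hR : R ∈ Ω) :
    (⟨.fbot, bigConj (.naf (atomFml (.qle R.head.L R.head.S)) :: R.body.map nnWC)⟩ :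
      NRule AtomX) ∈ nnTrans Ω := nnBase_sub Ω ⟨R, hR, Or.inr (Or.inl rfl)⟩
theorem rule_U {R} (hR : R ∈ Ω) :
    (⟨.fbot, bigConj (atomFml (.qlt R.head.U R.head.S) :: R.body.map nnWC)⟩ :
      NRule AtomX) ∈ nnTrans Ω := nnBase_sub Ω ⟨R, hR, Or.inr (Or.inr rfl)⟩

theorem occ_l {R} (hR : R ∈ Ω) {l} (hl : l ∈ posElems R.head.S) :
    atomOccurs (.qnot l) (nnTrans Ω) := ⟨_, rule_l hR hl, Or.inr (Or.inl rfl)⟩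
theorem occ_L {R} (hR : R ∈ Ω) : atomOccurs (.qle R.head.L R.head.S) (nnTrans Ω) :=
  ⟨_, rule_L hR, Or.inr (Or.inl rfl)⟩
theorem occ_U {R} (hR : R ∈ Ω) : atomOccurs (.qlt R.head.U R.head.S) (nnTrans Ω) :=
  ⟨_, rule_U hR, Or.inr (Or.inl rfl)⟩
theorem occ_bL {R} (hR : R ∈ Ω) {C} (hC : C ∈ R.body) :
    atomOccurs (.qle C.L C.S) (nnTrans Ω) :=
  ⟨_, rule_U hR, Or.inr (atoms_bigConj _ (nnWC C) (by simp; exact Or.inr ⟨C, hC, rfl⟩) _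
    (Or.inl rfl))⟩
theorem occ_bU {R} (hR : R ∈ Ω) {C} (hC : C ∈ R.body) :
    atomOccurs (.qlt C.U C.S) (nnTrans Ω) :=
  ⟨_, rule_U hR, Or.inr (atoms_bigConj _ (nnWC C) (by simp; exact Or.inr ⟨C, hC, rfl⟩) _
    (Or.inr rfl))⟩

theorem HS_body {R} (hR : R ∈ Ω) (F : Formula AtomX) :
    HS (Ext Ω Y Z) (Ext Ω Z Z) (bigConj (F :: R.body.map nnWC)) ↔
      HS (Ext Ω Y Z) (Ext Ω Z Z) F ∧
      ∀ C ∈ R.body, C.L ≤ (wsum Y Z C.S : EReal) ∧ (weightSum Z C.S : EReal) ≤ C.U := by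
  rw [HS_bigConj, List.forall_mem_cons, List.forall_mem_map]
  refine and_congr_right fun _ => forall₂_congr fun C hC => ?_
  unfold nnWC atomFml
  rw [HS_conj, HS_lit, HS_naf, ext_qle]
  unfold Formula.sat
  rw [ext_qlt, wsum_self]
  simp [occ_bL hR hC, occ_bU hR hC]

/-- Lemma C. -/
theorem ext_sat (hYZ : Y ⊆ Z) (hs : wProgSat Z Ω) (hh : hornSat Y (wProgReduct Z Ω)) :
    ∀ r ∈ nnTrans Ω, HS (Ext Ω Y Z) (Ext Ω Z Z) r.body → HS (Ext Ω Y Z) (Ext Ω Z Z) r.head := by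
  have hZZ : Z = {l | l.map AtomX.base ∈ Ext Ω Z Z} := by ext l; exact (ext_base l).symm
  have hbody : ∀ R ∈ Ω, (∀ C ∈ R.body, C.L ≤ (wsum Y Z C.S : EReal) ∧
      (weightSum Z C.S : EReal) ≤ C.U) → R.head.sat Z := by
    intro R hR hb
    refine hs R hR fun C hC => ⟨(hb C hC).1.trans ?_, (hb C hC).2⟩
    rw [← wsum_self]
    exact EReal.coe_le_coe_iff.2 (wsum_mono hYZ C.nonneg)
  intro r hr hb
  rcases nn_cases Ω r hr with h | h
  · obtain ⟨R, hR, ⟨l, hl, rfl | rfl⟩ | rfl | rfl⟩ := h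
    · refine ⟨occ_l hR hl, fun hlZ => (HS_naf _).1 hb ?_⟩
      exact (ext_base l).2 hlZ
    · obtain ⟨h1, h2⟩ := (HS_body hR _).1 hb
      have hlZ : l ∈ Z := by
        by_contra hn
        exact (HS_naf _).1 h1 ⟨occ_l hR hl, hn⟩
      refine (ext_base l).2 (hh ⟨l, R.body.map (fun C => C.lower.reduct Z)⟩
        ⟨R, hR, fun C hC => (h2 C hC).2, hl, hlZ, rfl⟩ ?_)
      intro C' hC'
      obtain ⟨C, hC, rfl⟩ := List.mem_map.1 hC'
      exact (reduct_sat Y Z C).2 (h2 C hC).1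
    · obtain ⟨h1, h2⟩ := (HS_body hR _).1 hb
      refine (HS_naf _).1 h1 ⟨occ_L hR, ?_⟩
      rw [wsum_self]
      exact (hbody R hR h2).1
    · obtain ⟨h1, h2⟩ := (HS_body hR _).1 hb
      have h3 := (ext_mono hYZ h1).2
      rw [wsum_self] at h3
      exact absurd (hbody R hR h2).2 (not_le.2 h3)
  · exact ext_WR hZZ r hr h hb

theorem horn_self : hornSat Z (wProgReduct Z Ω) := by
  rintro r ⟨R, _, _, _, h, _⟩ _
  exact h

theorem wsat_of (h : ∀ r ∈ nnTrans Ω, HS (Ext Ω Z Z) (Ext Ω Z Z) r.body →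
    HS (Ext Ω Z Z) (Ext Ω Z Z) r.head) : wProgSat Z Ω := by
  intro R hR hb
  have hb' : ∀ C ∈ R.body, C.L ≤ (wsum Z Z C.S : EReal) ∧ (weightSum Z C.S : EReal) ≤ C.U := by
    intro C hC
    rw [wsum_self]
    exact hb C hC
  constructor
  · by_contra hn
    refine h _ (rule_L hR) ((HS_body hR _).2 ⟨(HS_naf _).2 fun hq => hn ?_, hb'⟩)
    have := hq.2
    rwa [wsum_self] at this
  · by_contra hn
    refine h _ (rule_U hR) ((HS_body hR _).2 ⟨⟨occ_U hR, ?_⟩, hb'⟩)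
    rw [wsum_self]
    exact not_le.1 hn

theorem ext_cons : LitConsistent (Ext Ω Z Z) ↔ LitConsistent Z := by
  constructor
  · intro h a ha
    exact h (.base a) ha
  · rintro h (a | l | ⟨w, S⟩ | ⟨w, S⟩) ha
    · exact h a ha
    all_goals exact ha.2

theorem ext_answer : AnswerSet (Ext Ω Z Z) (nnTrans Ω) ↔ WAnswerSet Z Ω := by
  have hZZ : Z = {l | l.map AtomX.base ∈ Ext Ω Z Z} := by ext l; exact (ext_base l).symm
  constructor
  · rintro ⟨hc, hs, hm⟩
    rw [progSat_reduct] at hs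
    have hc' := ext_cons.1 hc
    have hw := wsat_of hs
    refine ⟨hc', hw, Set.Subset.antisymm (Set.sInter_subset_of_mem horn_self) ?_⟩
    intro l hl Y hY
    have hh : hornSat (Y ∩ Z) (wProgReduct Z Ω) := by
      intro r hr hb
      refine ⟨hY r hr fun C hC => ?_, horn_self r hr ?_⟩
      · obtain ⟨R, _, _, _, _, he⟩ := hr
        have hCs := hb C hC
        rw [he] at hC
        obtain ⟨C, _, rfl⟩ := List.mem_map.1 hC
        rw [reduct_sat] at hCs ⊢
        exact hCs.trans (EReal.coe_le_coe_iff.2 (wsum_mono Set.inter_subset_left C.nonneg))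
      · intro C hC
        obtain ⟨R, _, _, _, _, he⟩ := hr
        have hCs := hb C hC
        rw [he] at hC
        obtain ⟨C, _, rfl⟩ := List.mem_map.1 hC
        rw [reduct_sat] at hCs ⊢
        exact hCs.trans (EReal.coe_le_coe_iff.2 (wsum_mono Set.inter_subset_right C.nonneg))
    have hsub : Ext Ω (Y ∩ Z) Z ⊆ Ext Ω Z Z := ext_mono Set.inter_subset_right
    have he := hm (Ext Ω (Y ∩ Z) Z) (fun a ha => hc a ⟨hsub ha.1, hsub ha.2⟩)
      ((progSat_reduct _).2 (ext_sat Set.inter_subset_right hw hh)) hsub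
    have : l.map AtomX.base ∈ Ext Ω (Y ∩ Z) Z := by rw [he]; exact (ext_base l).2 hl
    exact ((ext_base l).1 this).1
  · rintro ⟨hc, hw, hcl⟩
    refine ⟨ext_cons.2 hc, (progSat_reduct _).2 (ext_sat subset_rfl hw horn_self), ?_⟩
    intro A _ hA hAZ
    rw [progSat_reduct] at hA
    have hsub : Ext Ω {l | l.map AtomX.base ∈ A} Z ⊆ A := ext_sub hA rfl hZZ
    have hh : hornSat {l | l.map AtomX.base ∈ A} (wProgReduct Z Ω) := by
      rintro ⟨l, B⟩ ⟨R, hR, hU, hl, hlZ, he⟩ hb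
      refine hA _ (rule_l hR hl) (HS_mono hsub _ ((HS_body hR _).2 ⟨(HS_naf _).2 ?_, ?_⟩))
      · exact fun hq => hq.2 hlZ
      · intro C hC
        refine ⟨?_, hU C hC⟩
        rw [← reduct_sat]
        refine hb _ ?_
        rw [he]
        exact List.mem_map.2 ⟨C, hC, rfl⟩
    have hZA : Z ⊆ {l | l.map AtomX.base ∈ A} := by
      rw [← hcl]
      exact Set.sInter_subset_of_mem hh
    exact Set.Subset.antisymm hAZ ((ext_mono hZA).trans hsub)

theorem answer_eq_ext {A : Set (Lit AtomX)} (hA : AnswerSet A (nnTrans Ω))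
    (hZ : Z = {l | l.map AtomX.base ∈ A}) : A = Ext Ω Z Z := by
  obtain ⟨hc, hs, hm⟩ := hA
  rw [progSat_reduct] at hs
  refine Set.Subset.antisymm ?_ (ext_sub hs hZ hZ)
  have := hm (A ∩ Ext Ω Z Z) (fun a ha => hc a ⟨ha.1.1, ha.2.1⟩) ?_ Set.inter_subset_left
  · rw [← this]; exact Set.inter_subset_right
  rw [progSat_reduct]
  intro r hr hb
  have h1 := hs r hr (HS_mono Set.inter_subset_left _ hb)
  have h2 := HS_mono Set.inter_subset_right _ hb
  rcases nn_cases Ω r hr with h | h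
  · obtain ⟨R, hR, ⟨l, hl, rfl | rfl⟩ | rfl | rfl⟩ := h
    · refine ⟨h1, occ_l hR hl, ?_⟩
      rw [hZ]
      exact (HS_naf _).1 hb
    · refine ⟨h1, (ext_base l).2 ?_⟩
      rw [hZ]
      exact h1
    · exact h1
    · exact h1
  · have h3 := ext_WR hZ r hr h h2
    cases h <;> exact ⟨h1, h3⟩

theorem ext_strip : {l ∈ Ext Ω Z Z | l.atom ∉ QSet Ω} = Lit.map AtomX.base '' Z := by
  ext x
  constructor
  · rintro ⟨hx, hn⟩
    rcases x with ((a | l | ⟨w, S⟩ | ⟨w, S⟩) | (a | l | ⟨w, S⟩ | ⟨w, S⟩))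
    · exact ⟨.pos a, hx, rfl⟩
    · exact absurd ⟨trivial, hx.1⟩ hn
    · exact absurd ⟨trivial, hx.1⟩ hn
    · exact absurd ⟨trivial, hx.1⟩ hn
    · exact ⟨.neg a, hx, rfl⟩
    all_goals exact hx.elim
  · rintro ⟨l, hl, rfl⟩
    refine ⟨(ext_base l).2 hl, fun h => ?_⟩
    cases l <;> exact h.1

theorem map_inj : Function.Injective (Lit.map AtomX.base) := by
  rintro (a | a) (b | b) h <;> cases h <;> rfl

end ExtL
end NNProof

/-- Theorem 2: `Z ↦ Z ∖ Q_Ω` is a bijection from the answer sets of `[Ω]^{nn}` onto the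
answer sets of `Ω` (the latter viewed over the extended vocabulary via `base`). -/
theorem nn_translation_bijection (Ω : Set (WRule ℕ)) :
    Set.BijOn (fun Z : Set (Lit AtomX) => {l ∈ Z | l.atom ∉ QSet Ω})
      {Z : Set (Lit AtomX) | AnswerSet Z (nnTrans Ω)}
      {Z : Set (Lit AtomX) |
        ∃ Z₀ : Set (Lit ℕ), WAnswerSet Z₀ Ω ∧ Z = Lit.map AtomX.base '' Z₀} := by
  refine ⟨?_, ?_, ?_⟩
  · intro A hA
    have he := NNProof.answer_eq_ext hA rfl
    refine ⟨{l | l.map AtomX.base ∈ A}, ?_, ?_⟩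
    · have hA' : AnswerSet A (nnTrans Ω) := hA
      rw [he] at hA'
      exact NNProof.ext_answer.1 hA'
    · have := NNProof.ext_strip (Ω := Ω) (Z := {l | l.map AtomX.base ∈ A})
      rw [← he] at this
      exact this
  · intro A hA B hB hAB
    have heA := NNProof.answer_eq_ext hA rfl
    have heB := NNProof.answer_eq_ext hB rfl
    have h1 := NNProof.ext_strip (Ω := Ω) (Z := {l | l.map AtomX.base ∈ A})
    have h2 := NNProof.ext_strip (Ω := Ω) (Z := {l | l.map AtomX.base ∈ B})
    rw [← heA] at h1
    rw [← heB] at h2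
    have h3 := NNProof.map_inj.image_injective (h1.symm.trans (Eq.trans hAB h2))
    rw [heA, heB, h3]
  · rintro _ ⟨Z, hZ, rfl⟩
    exact ⟨NNProof.Ext Ω Z Z, NNProof.ext_answer.2 hZ, NNProof.ext_strip⟩
end

section
/- There is a constant K > 0 such that for every finite program Ω with weight constraints in which every weight is an integer, the number of weight atoms occurring in the nonnested translation [Ω]^{nn} is at most K · Σ_C (L(C)+1)·(W(C)+1), where the sum ranges over all weight constraints C occurring in Ω, L(C) denotes the length of C (the number of rule elements of C) and W(C) denotes the weight of C (the sum of its weights). -/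
open Classical

/-- The weight atoms. -/
def AtomX.isWeightAtom : AtomX → Prop
  | .qle _ _ => True
  | .qlt _ _ => True
  | _ => False

/-- The weight constraints occurring in `Ω`. -/
def wcsOf (Ω : Set (WRule ℕ)) : Set (WConstraint ℕ) :=
  {C : WConstraint ℕ | ∃ R ∈ Ω, C = R.head ∨ C ∈ R.body}

/-- Invariant: `T` is a prefix of the list of some constraint and `w` is the bound minus a
natural number not exceeding the weight of the removed part. -/
def GoodV (Ω : Set (WRule ℕ)) (sel : WConstraint ℕ → EReal) (w : EReal)
    (T : List (RElem ℕ × ℝ)) : Prop :=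
  ∃ C ∈ wcsOf Ω, ∃ n : ℕ, T <+: C.S ∧ w = sel C - (((n : ℕ) : ℝ) : EReal) ∧
    (n : ℝ) + sumW T ≤ sumW C.S

/-- Atoms allowed by the invariant. -/
def GoodA (Ω : Set (WRule ℕ)) : AtomX → Prop
  | .qle w T => GoodV Ω WConstraint.L w T
  | .qlt w T => GoodV Ω WConstraint.U w T
  | _ => True

theorem sumW_append (S T : List (RElem ℕ × ℝ)) : sumW (S ++ T) = sumW S + sumW T := by
  simp [sumW]

theorem sumW_nonneg (S : List (RElem ℕ × ℝ)) (h : ∀ p ∈ S, (0 : ℝ) ≤ p.2) : 0 ≤ sumW S := by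
  unfold sumW
  apply List.sum_nonneg
  intro x hx
  obtain ⟨p, hp, rfl⟩ := List.mem_map.1 hx
  exact h p hp

theorem GoodV.base {Ω : Set (WRule ℕ)} (sel : WConstraint ℕ → EReal) {C : WConstraint ℕ}
    (hC : C ∈ wcsOf Ω) : GoodV Ω sel (sel C) C.S :=
  ⟨C, hC, 0, List.prefix_rfl, by simp, by simp⟩

theorem ereal_sub_sub (a : EReal) (x y : ℝ) :
    a - (x : EReal) - (y : EReal) = a - ((x + y : ℝ) : EReal) := by
  induction a with
  | bot => simp
  | top => rw [EReal.top_sub_coe, EReal.top_sub_coe, EReal.top_sub_coe]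
  | coe a => norm_cast; ring

theorem GoodV.step {Ω : Set (WRule ℕ)}
    (hInt : ∀ C ∈ wcsOf Ω, ∀ p ∈ C.S, ∃ z : ℤ, p.2 = (z : ℝ))
    {sel : WConstraint ℕ → EReal} {w : EReal} {T : List (RElem ℕ × ℝ)}
    (h : GoodV Ω sel w T) (hT : T ≠ []) :
    ∃ (S' : List (RElem ℕ × ℝ)) (c : RElem ℕ) (wm : ℝ), T = S' ++ [(c, wm)] ∧
      GoodV Ω sel w S' ∧ GoodV Ω sel (w - ((wm : ℝ) : EReal)) S' := by
  obtain ⟨C, hC, n, hpre, rfl, hn⟩ := h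
  rcases List.eq_nil_or_concat T with h0 | ⟨S', ⟨c, wm⟩, rfl⟩
  · exact absurd h0 hT
  have hmem : (c, wm) ∈ C.S := hpre.subset (by simp)
  have hnn : (0 : ℝ) ≤ wm := C.nonneg _ hmem
  obtain ⟨z, hz⟩ := hInt C hC _ hmem
  simp only at hz
  have hz0 : 0 ≤ z := by rw [hz] at hnn; exact_mod_cast hnn
  obtain ⟨m, rfl⟩ := Int.eq_ofNat_of_zero_le hz0
  have hz' : wm = (m : ℝ) := by rw [hz]; simp
  have hpre' : S' <+: C.S := (List.prefix_append S' [(c, wm)]).trans (by simpa using hpre)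
  have hs : sumW (S' ++ [(c, wm)]) = sumW S' + wm := by
    rw [sumW_append]; simp [sumW]
  rw [List.concat_eq_append, hs] at hn
  refine ⟨S', c, wm, by simp, ⟨C, hC, n, hpre', rfl, by linarith⟩,
    ⟨C, hC, n + m, hpre', ?_, ?_⟩⟩
  · rw [ereal_sub_sub, hz']; push_cast; rfl
  · push_cast; linarith

/-- All rules whose atoms are allowed. -/
def GoodP (Ω : Set (WRule ℕ)) : Set (NRule AtomX) :=
  {r | ∀ a, (a ∈ r.head.atoms ∨ a ∈ r.body.atoms) → GoodA Ω a}

theorem reFmlX_good (Ω : Set (WRule ℕ)) (c : RElem ℕ) (a : AtomX) (h : a ∈ (reFmlX c).atoms) :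
    GoodA Ω a := by
  rcases c with (l | l) | (l | l) <;>
  · simp [reFmlX, Formula.atoms, Lit.atom, Lit.map] at h
    subst h
    trivial

theorem goodP_closed (Ω : Set (WRule ℕ))
    (hInt : ∀ C ∈ wcsOf Ω, ∀ p ∈ C.S, ∃ z : ℤ, p.2 = (z : ℝ)) : ClosedProg (GoodP Ω) := by
  constructor
  · rintro w S ⟨r, hr, ha⟩
    have hg : GoodA Ω (.qle w S) := hr _ ha
    refine ⟨fun _ => ?_, fun h0 h1 => ?_⟩
    · intro a h
      simp [atomFml, Formula.atoms, Lit.atom] at h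
      subst h; exact hg
    · have hne : S ≠ [] := by
        rintro rfl
        simp [sumW] at h1
        exact absurd h0 (not_lt.2 h1)
      obtain ⟨S', c, wm, hS, g1, g2⟩ := GoodV.step hInt hg hne
      refine ⟨S', c, wm, hS, ?_, ?_⟩
      · intro a h
        simp [atomFml, Formula.atoms, Lit.atom] at h
        rcases h with rfl | rfl
        · exact hg
        · exact g1
      · intro a h
        simp [atomFml, Formula.atoms, Lit.atom] at h
        rcases h with rfl | rfl | h
        · exact hg
        · exact g2
        · exact reFmlX_good Ω c a h
  · rintro w S ⟨r, hr, ha⟩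
    have hg : GoodA Ω (.qlt w S) := hr _ ha
    refine ⟨fun _ => ?_, fun h0 h1 => ?_⟩
    · intro a h
      simp [atomFml, Formula.atoms, Lit.atom] at h
      subst h; exact hg
    · have hne : S ≠ [] := by
        rintro rfl
        simp [sumW] at h1
        exact absurd h1 (not_lt.2 h0)
      obtain ⟨S', c, wm, hS, g1, g2⟩ := GoodV.step hInt hg hne
      refine ⟨S', c, wm, hS, ?_, ?_⟩
      · intro a h
        simp [atomFml, Formula.atoms, Lit.atom] at h
        rcases h with rfl | rfl
        · exact hg
        · exact g1
      · intro a h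
        simp [atomFml, Formula.atoms, Lit.atom] at h
        rcases h with rfl | rfl | h
        · exact hg
        · exact g2
        · exact reFmlX_good Ω c a h

theorem body_good (Ω : Set (WRule ℕ)) (B : List (WConstraint ℕ)) (hB : ∀ C ∈ B, C ∈ wcsOf Ω)
    (a : AtomX) (h : a ∈ (bigConj (B.map nnWC)).atoms) : GoodA Ω a := by
  induction B with
  | nil => simp [bigConj, Formula.atoms] at h
  | cons C B ih =>
    simp only [List.map_cons, bigConj, Formula.atoms, nnWC, atomFml, Lit.atom, Set.mem_union,
      Set.mem_singleton_iff] at h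
    have hC := hB C (by simp)
    rcases h with (rfl | rfl) | h
    · exact GoodV.base WConstraint.L hC
    · exact GoodV.base WConstraint.U hC
    · exact ih (fun D hD => hB D (by simp [hD])) h

theorem lit_good (Ω : Set (WRule ℕ)) (l : Lit ℕ) : GoodA Ω (l.map AtomX.base).atom := by
  cases l <;> trivial

theorem nnBase_sub (Ω : Set (WRule ℕ)) : nnBase Ω ⊆ GoodP Ω := by
  rintro r ⟨R, hR, h⟩ a ha
  have hh : R.head ∈ wcsOf Ω := ⟨R, hR, Or.inl rfl⟩
  have hb : ∀ C ∈ R.body, C ∈ wcsOf Ω := fun C hC => ⟨R, hR, Or.inr hC⟩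
  rcases h with ⟨l, _, rfl | rfl⟩ | rfl | rfl <;>
    simp only [bigConj, Formula.atoms, atomFml, Lit.atom, Set.mem_union,
      Set.mem_singleton_iff, Set.mem_empty_iff_false, false_or] at ha
  · rcases ha with rfl | rfl
    · trivial
    · exact lit_good Ω l
  · rcases ha with rfl | rfl | ha
    · exact lit_good Ω l
    · trivial
    · exact body_good Ω _ hb a ha
  · rcases ha with rfl | ha
    · exact GoodV.base WConstraint.L hh
    · exact body_good Ω _ hb a ha
  · rcases ha with rfl | ha
    · exact GoodV.base WConstraint.U hh
    · exact body_good Ω _ hb a ha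

theorem wcsOf_finite (Ω : Set (WRule ℕ)) (h : Ω.Finite) : (wcsOf Ω).Finite := by
  have : wcsOf Ω = ⋃ R ∈ Ω, {C | C ∈ R.head :: R.body} := by
    ext C; simp [wcsOf]
  rw [this]
  exact h.biUnion fun R _ => List.finite_toSet _

/-- The candidate weight atoms of a constraint. -/
noncomputable def candW (C : WConstraint ℕ) : Finset AtomX :=
  ((Finset.range (C.S.length + 1) ×ˢ Finset.range (⌊sumW C.S⌋₊ + 1)).image
    fun p : ℕ × ℕ => AtomX.qle (C.L - (((p.2 : ℕ) : ℝ) : EReal)) (C.S.take p.1)) ∪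
  ((Finset.range (C.S.length + 1) ×ˢ Finset.range (⌊sumW C.S⌋₊ + 1)).image
    fun p : ℕ × ℕ => AtomX.qlt (C.U - (((p.2 : ℕ) : ℝ) : EReal)) (C.S.take p.1))

theorem candW_card (C : WConstraint ℕ) :
    ((candW C).card : ℝ) ≤ 2 * (((C.S.length : ℝ) + 1) * (sumW C.S + 1)) := by
  have h1 : (candW C).card ≤ (C.S.length + 1) * (⌊sumW C.S⌋₊ + 1) +
      (C.S.length + 1) * (⌊sumW C.S⌋₊ + 1) := by
    refine (Finset.card_union_le _ _).trans (add_le_add ?_ ?_) <;>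
    · refine Finset.card_image_le.trans ?_
      simp
  have h2 : ((candW C).card : ℝ) ≤ ((C.S.length : ℝ) + 1) * ((⌊sumW C.S⌋₊ : ℝ) + 1) +
      ((C.S.length : ℝ) + 1) * ((⌊sumW C.S⌋₊ : ℝ) + 1) := by exact_mod_cast h1
  have h3 : (⌊sumW C.S⌋₊ : ℝ) ≤ sumW C.S := Nat.floor_le (sumW_nonneg _ C.nonneg)
  have h4 : ((C.S.length : ℝ) + 1) * ((⌊sumW C.S⌋₊ : ℝ) + 1) ≤
      ((C.S.length : ℝ) + 1) * (sumW C.S + 1) := by gcongr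
  linarith

theorem cand_bounds {C : WConstraint ℕ} {T : List (RElem ℕ × ℝ)} {n : ℕ} (hp : T <+: C.S)
    (hn : (n : ℝ) + sumW T ≤ sumW C.S) :
    (T.length, n) ∈ Finset.range (C.S.length + 1) ×ˢ Finset.range (⌊sumW C.S⌋₊ + 1) ∧
      C.S.take T.length = T := by
  have h0 : 0 ≤ sumW T := sumW_nonneg T fun p h => C.nonneg p (hp.subset h)
  have h1 : n ≤ ⌊sumW C.S⌋₊ := Nat.le_floor (by linarith)
  have h2 := hp.length_le
  refine ⟨?_, (List.prefix_iff_eq_take.1 hp).symm⟩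
  simp only [Finset.mem_product, Finset.mem_range]
  omega

theorem good_mem_cand {Ω : Set (WRule ℕ)} {a : AtomX} (hw : a.isWeightAtom) (h : GoodA Ω a) :
    ∃ C ∈ wcsOf Ω, a ∈ candW C := by
  cases a with
  | base _ => exact hw.elim
  | qnot _ => exact hw.elim
  | qle w T =>
    obtain ⟨C, hC, n, hp, rfl, hn⟩ := h
    obtain ⟨h1, h2⟩ := cand_bounds hp hn
    refine ⟨C, hC, Finset.mem_union_left _ (Finset.mem_image.2 ⟨_, h1, ?_⟩)⟩
    simp only [h2]
  | qlt w T =>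
    obtain ⟨C, hC, n, hp, rfl, hn⟩ := h
    obtain ⟨h1, h2⟩ := cand_bounds hp hn
    refine ⟨C, hC, Finset.mem_union_right _ (Finset.mem_image.2 ⟨_, h1, ?_⟩)⟩
    simp only [h2]

/-- Proposition 2: there is a constant `K > 0` such that for every finite program `Ω`
with integer weights, the number of weight atoms occurring in `[Ω]^{nn}` is at most
`K · Σ_C (L(C)+1)·(W(C)+1)`, the sum ranging over the weight constraints `C` of `Ω`. -/
theorem weight_atoms_bound :
    ∃ K : ℝ, 0 < K ∧
      ∀ Ω : Set (WRule ℕ), Ω.Finite →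
        (∀ C ∈ wcsOf Ω, ∀ p ∈ C.S, ∃ z : ℤ, p.2 = (z : ℝ)) →
        {a : AtomX | a.isWeightAtom ∧ atomOccurs a (nnTrans Ω)}.Finite ∧
        ({a : AtomX | a.isWeightAtom ∧ atomOccurs a (nnTrans Ω)}.ncard : ℝ) ≤
          K * ∑ᶠ C ∈ wcsOf Ω, ((C.S.length : ℝ) + 1) * (sumW C.S + 1) := by
  refine ⟨2, two_pos, fun Ω hfin hInt => ?_⟩
  have hW := wcsOf_finite Ω hfin
  have hsub : {a : AtomX | a.isWeightAtom ∧ atomOccurs a (nnTrans Ω)} ⊆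
      ((hW.toFinset.biUnion candW : Finset AtomX) : Set AtomX) := by
    rintro a ⟨hw, r, hr, ha⟩
    have hr' : r ∈ GoodP Ω := hr _ ⟨nnBase_sub Ω, goodP_closed Ω hInt⟩
    obtain ⟨C, hC, hm⟩ := good_mem_cand hw (hr' a ha)
    exact Finset.mem_coe.2 (Finset.mem_biUnion.2 ⟨C, hW.mem_toFinset.2 hC, hm⟩)
  refine ⟨(Finset.finite_toSet _).subset hsub, ?_⟩
  have h1 := Set.ncard_le_ncard hsub (Finset.finite_toSet _)
  rw [Set.ncard_coe_finset] at h1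
  have h2 : ((hW.toFinset.biUnion candW).card : ℝ) ≤ ∑ C ∈ hW.toFinset, ((candW C).card : ℝ) := by
    exact_mod_cast Finset.card_biUnion_le
  rw [finsum_mem_eq_finite_toFinset_sum _ hW, Finset.mul_sum]
  calc _ ≤ ((hW.toFinset.biUnion candW).card : ℝ) := by exact_mod_cast h1
    _ ≤ _ := h2
    _ ≤ _ := Finset.sum_le_sum fun C _ => candW_card C
end

section
/- Programs Ω₁ and Ω₂ with weight constraints are strongly equivalent if and only if their translations [Ω₁] and [Ω₂] are strongly equivalent as programs with nested expressions. -/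
open Classical

/-- Satisfaction of the reduct of a rule element. -/
def rsat (Y Z : Set (Lit ℕ)) : RElem ℕ → Prop
  | .pos l => l ∈ Y
  | .neg l => l ∉ Z

/-- Mixed weight sum: positive elements evaluated at `Y`, negative ones at `Z`. -/
noncomputable def mixSum (Y Z : Set (Lit ℕ)) (S : List (RElem ℕ × ℝ)) : ℝ :=
  (S.map fun p => if rsat Y Z p.1 then p.2 else 0).sum

theorem rsat_self (Z : Set (Lit ℕ)) (c : RElem ℕ) : rsat Z Z c ↔ c.sat Z := by
  cases c <;> rfl

theorem mixSum_self (Z : Set (Lit ℕ)) (S : List (RElem ℕ × ℝ)) :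
    mixSum Z Z S = weightSum Z S := by
  simp only [mixSum, weightSum, rsat_self]

theorem mixSum_mono {Y Y' Z : Set (Lit ℕ)} (h : Y ⊆ Y') (S : List (RElem ℕ × ℝ))
    (hS : ∀ p ∈ S, (0 : ℝ) ≤ p.2) : mixSum Y Z S ≤ mixSum Y' Z S := by
  apply List.sum_le_sum
  intro p hp
  have h0 := hS p hp
  obtain ⟨c, w⟩ := p
  cases c with
  | pos l =>
    by_cases h1 : l ∈ Y
    · have h2 := h h1
      simp [rsat, h1, h2]
    · by_cases h2 : l ∈ Y' <;> simp [rsat, h1, h2, h0]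
  | neg l => exact le_rfl

theorem mixSum_congr {Y Z : Set (Lit ℕ)} (h : Y ⊆ Z) (S : List (RElem ℕ × ℝ))
    (hS : ∀ l ∈ posElems S, l ∈ Z → l ∈ Y) : mixSum Y Z S = mixSum Z Z S := by
  unfold mixSum
  congr 1
  apply List.map_congr_left
  rintro ⟨c, w⟩ hp
  cases c with
  | pos l =>
    have : l ∈ Y ↔ l ∈ Z := ⟨fun h' => h h', hS l ⟨w, hp⟩⟩
    by_cases h2 : l ∈ Z
    · simp [rsat, this.2 h2, h2]
    · simp [rsat, mt this.1 h2, h2]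
  | neg l => rfl

theorem mixSum_split (Y Z : Set (Lit ℕ)) (S : List (RElem ℕ × ℝ)) :
    mixSum Y Z S = weightSum Y (S.filter (fun p => !p.1.isNegB)) + negSatWeight Z S := by
  induction S with
  | nil => simp [mixSum, weightSum, negSatWeight]
  | cons p S ih =>
    obtain ⟨c, w⟩ := p
    have e1 : mixSum Y Z ((c, w) :: S) = (if rsat Y Z c then w else 0) + mixSum Y Z S := by
      simp [mixSum]
    have e2 : negSatWeight Z ((c, w) :: S) =
        (if c.isNegB = true ∧ c.sat Z then w else 0) + negSatWeight Z S := by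
      simp [negSatWeight]
    rw [e1, e2, ih]
    cases c with
    | pos l =>
      have e3 : weightSum Y (((RElem.pos l, w) :: S).filter (fun p => !p.1.isNegB)) =
          (if l ∈ Y then w else 0) + weightSum Y (S.filter (fun p => !p.1.isNegB)) := by
        by_cases h : l ∈ Y <;> simp [weightSum, RElem.isNegB, RElem.sat, h]
      rw [e3]
      by_cases h : l ∈ Y <;> simp [rsat, RElem.isNegB, h, add_assoc]
    | neg l =>
      have e3 : weightSum Y (((RElem.neg l, w) :: S).filter (fun p => !p.1.isNegB)) =
          weightSum Y (S.filter (fun p => !p.1.isNegB)) := by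
        simp [RElem.isNegB]
      rw [e3]
      by_cases h : l ∈ Z <;> simp [rsat, RElem.isNegB, RElem.sat, h, add_left_comm]

theorem lower_reduct_sat (Y Z : Set (Lit ℕ)) (C : WConstraint ℕ) :
    (C.lower.reduct Z).sat Y ↔ C.L ≤ (mixSum Y Z C.S : EReal) := by
  simp only [LConstraint.sat, LConstraint.reduct, WConstraint.lower, mixSum_split]
  rw [EReal.coe_add]
  exact EReal.sub_le_iff_le_add (Or.inl (EReal.coe_ne_bot _)) (Or.inl (EReal.coe_ne_top _))

theorem reduct_self (Z : Set (Lit ℕ)) (F : Formula ℕ) : (F.reduct Z).sat Z ↔ F.sat Z := by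
  induction F with
  | lit l => rfl
  | fbot => rfl
  | ftop => rfl
  | naf F ih =>
    by_cases h : F.sat Z <;> simp [Formula.reduct, Formula.sat, h]
  | conj F G ih1 ih2 => simp only [Formula.reduct, Formula.sat, ih1, ih2]
  | disj F G ih1 ih2 => simp only [Formula.reduct, Formula.sat, ih1, ih2]

theorem naf_reduct_sat (Y Z : Set (Lit ℕ)) (F : Formula ℕ) :
    ((Formula.naf F).reduct Z).sat Y ↔ ¬ F.sat Z := by
  by_cases h : F.sat Z <;> simp [Formula.reduct, Formula.sat, h]

theorem bigConj_reduct_sat (Y Z : Set (Lit ℕ)) (Fs : List (Formula ℕ)) :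
    ((bigConj Fs).reduct Z).sat Y ↔ ∀ F ∈ Fs, (F.reduct Z).sat Y := by
  induction Fs with
  | nil => simp [bigConj, Formula.reduct, Formula.sat]
  | cons F Fs ih => simp [bigConj, Formula.reduct, Formula.sat, ih]

theorem bigDisj_reduct_sat (Y Z : Set (Lit ℕ)) (Fs : List (Formula ℕ)) :
    ((bigDisj Fs).reduct Z).sat Y ↔ ∃ F ∈ Fs, (F.reduct Z).sat Y := by
  induction Fs with
  | nil => simp [bigDisj, Formula.reduct, Formula.sat]
  | cons F Fs ih => simp [bigDisj, Formula.reduct, Formula.sat, ih]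

theorem angled_reduct_sat (Y Z : Set (Lit ℕ)) {n : ℕ} (F : Fin n → Formula ℕ)
    (X : Finset (Finset (Fin n))) :
    ((angled F X).reduct Z).sat Y ↔ ∃ I ∈ X, ∀ i ∈ I, ((F i).reduct Z).sat Y := by
  simp [angled, bigDisj_reduct_sat, bigConj_reduct_sat]

theorem toFormula_reduct_sat (Y Z : Set (Lit ℕ)) (c : RElem ℕ) :
    (c.toFormula.reduct Z).sat Y ↔ rsat Y Z c := by
  cases c with
  | pos l => rfl
  | neg l => exact naf_reduct_sat Y Z _

theorem mixSum_eq_filter (Y Z : Set (Lit ℕ)) (S : List (RElem ℕ × ℝ)) :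
    mixSum Y Z S = ∑ i ∈ Finset.univ.filter (fun i : Fin S.length => rsat Y Z (S.get i).1),
      (S.get i).2 := by
  rw [Finset.sum_filter]
  unfold mixSum
  rw [← Fin.sum_univ_fun_getElem]
  rfl

theorem exists_subset_iff (Y Z : Set (Lit ℕ)) (S : List (RElem ℕ × ℝ))
    (hS : ∀ p ∈ S, (0 : ℝ) ≤ p.2) (Q : ℝ → Prop) (hQ : ∀ a b, a ≤ b → Q a → Q b) :
    (∃ I : Finset (Fin S.length), Q (∑ i ∈ I, (S.get i).2) ∧ ∀ i ∈ I, rsat Y Z (S.get i).1) ↔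
      Q (mixSum Y Z S) := by
  constructor
  · rintro ⟨I, h1, h2⟩
    refine hQ _ _ ?_ h1
    rw [mixSum_eq_filter]
    apply Finset.sum_le_sum_of_subset_of_nonneg
    · intro i hi
      simpa using h2 i hi
    · intro i _ _
      exact hS _ (List.get_mem _ _)
  · intro h
    refine ⟨_, (mixSum_eq_filter Y Z S) ▸ h, ?_⟩
    intro i hi
    exact (Finset.mem_filter.1 hi).2

theorem trLower_reduct_sat (Y Z : Set (Lit ℕ)) (L : EReal) (S : List (RElem ℕ × ℝ))
    (hS : ∀ p ∈ S, (0 : ℝ) ≤ p.2) :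
    ((trLower L S).reduct Z).sat Y ↔ L ≤ (mixSum Y Z S : EReal) := by
  rw [trLower, angled_reduct_sat]
  simp only [toFormula_reduct_sat, Finset.mem_filter, Finset.mem_univ, true_and]
  exact exists_subset_iff Y Z S hS (fun x => L ≤ (x : EReal))
    (fun a b hab h => h.trans (EReal.coe_le_coe_iff.2 hab))

theorem trUpper_reduct_sat (Y Z : Set (Lit ℕ)) (U : EReal) (S : List (RElem ℕ × ℝ))
    (hS : ∀ p ∈ S, (0 : ℝ) ≤ p.2) :
    ((trUpper S U).reduct Z).sat Y ↔ (weightSum Z S : EReal) ≤ U := by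
  rw [trUpper, naf_reduct_sat, ← reduct_self, angled_reduct_sat]
  simp only [toFormula_reduct_sat, Finset.mem_filter, Finset.mem_univ, true_and]
  rw [← not_lt, ← mixSum_self]
  exact not_congr (exists_subset_iff Z Z S hS (fun x => U < (x : EReal))
    (fun a b hab h => h.trans_le (EReal.coe_le_coe_iff.2 hab)))

/-- Here-and-there satisfaction of a weight constraint. -/
def htC (Y Z : Set (Lit ℕ)) (C : WConstraint ℕ) : Prop :=
  C.L ≤ (mixSum Y Z C.S : EReal) ∧ (weightSum Z C.S : EReal) ≤ C.U

theorem trWC_reduct_sat (Y Z : Set (Lit ℕ)) (C : WConstraint ℕ) :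
    ((trWC C).reduct Z).sat Y ↔ htC Y Z C := by
  simp only [trWC, Formula.reduct, Formula.sat, htC, trLower_reduct_sat _ _ _ _ C.nonneg,
    trUpper_reduct_sat _ _ _ _ C.nonneg]

theorem htC_self (Z : Set (Lit ℕ)) (C : WConstraint ℕ) : htC Z Z C ↔ C.sat Z := by
  simp only [htC, WConstraint.sat, mixSum_self]

theorem htC_mono {Y Y' Z : Set (Lit ℕ)} (h : Y ⊆ Y') {C : WConstraint ℕ} (hC : htC Y Z C) :
    htC Y' Z C :=
  ⟨hC.1.trans (EReal.coe_le_coe_iff.2 (mixSum_mono h _ C.nonneg)), hC.2⟩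

/-- Here-and-there satisfaction of a rule with weight constraints. -/
def htR (Y Z : Set (Lit ℕ)) (R : WRule ℕ) : Prop :=
  (∀ C ∈ R.body, htC Y Z C) →
    (∀ l ∈ posElems R.head.S, l ∈ Z → l ∈ Y) ∧ htC Y Z R.head

theorem choice_sat (Y Z : Set (Lit ℕ)) (S : List (RElem ℕ × ℝ)) :
    (∀ F ∈ choiceFmls S, (F.reduct Z).sat Y) ↔ ∀ l ∈ posElems S, l ∈ Z → l ∈ Y := by
  have key : ∀ l : Lit ℕ,
      ((Formula.disj (.lit l) (.naf (.lit l))).reduct Z).sat Y ↔ (l ∈ Z → l ∈ Y) := by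
    intro l
    have := naf_reduct_sat Y Z (.lit l)
    simp only [Formula.sat] at this
    rw [Formula.reduct, Formula.sat, this]
    simp only [Formula.reduct, Formula.sat]
    tauto
  constructor
  · rintro h l ⟨w, hw⟩
    rw [← key]
    apply h
    rw [choiceFmls, List.mem_filterMap]
    exact ⟨_, hw, rfl⟩
  · intro h F hF
    rw [choiceFmls, List.mem_filterMap] at hF
    obtain ⟨⟨c, w⟩, hp, hF⟩ := hF
    cases c with
    | pos l =>
      simp only [Option.some.injEq] at hF
      subst hF
      exact (key l).2 (h l ⟨w, hp⟩)
    | neg l => simp at hF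

theorem progSat_tr_s7 (Y Z : Set (Lit ℕ)) (Ω : Set (WRule ℕ)) :
    progSat Y (progReduct Z (trProg Ω)) ↔ ∀ R ∈ Ω, htR Y Z R := by
  simp only [progSat, progReduct, trProg, Set.forall_mem_image]
  refine forall₂_congr fun R _ => ?_
  simp only [trRule, bigConj_reduct_sat, htR, List.forall_mem_append, choice_sat,
    List.forall_mem_map, List.forall_mem_singleton, trWC_reduct_sat]

theorem htR_self (Z : Set (Lit ℕ)) (Ω : Set (WRule ℕ)) :
    (∀ R ∈ Ω, htR Z Z R) ↔ wProgSat Z Ω := by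
  simp only [htR, htC_self, wProgSat]
  refine forall₂_congr fun R _ => ?_
  simp

theorem hornSat_iff {Y Z : Set (Lit ℕ)} (h : Y ⊆ Z) {Ω : Set (WRule ℕ)} (hΩ : wProgSat Z Ω) :
    hornSat Y (wProgReduct Z Ω) ↔ ∀ R ∈ Ω, htR Y Z R := by
  constructor
  · intro hY R hR hb
    have h1 : ∀ l ∈ posElems R.head.S, l ∈ Z → l ∈ Y := by
      intro l hl hlZ
      refine hY ⟨l, R.body.map (fun C => C.lower.reduct Z)⟩
        ⟨R, hR, fun C hC => (hb C hC).2, hl, hlZ, rfl⟩ ?_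
      simp only [List.forall_mem_map]
      intro C hC
      exact (lower_reduct_sat Y Z C).2 (hb C hC).1
    refine ⟨h1, ?_⟩
    have h2 := (htC_self Z R.head).2
      (hΩ R hR fun C hC => (htC_self Z C).1 (htC_mono h (hb C hC)))
    rw [htC, mixSum_congr h _ h1]
    exact h2
  · rintro hY ⟨l, b⟩ ⟨R, hR, hU, hl, hlZ, hb⟩ hs
    simp only at hl hlZ hb hs ⊢
    subst hb
    simp only [List.forall_mem_map, lower_reduct_sat] at hs
    exact (hY R hR fun C hC => ⟨hs C hC, hU C hC⟩).1 l hl hlZ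

theorem weightSum_mono_pos {Y Y' Z : Set (Lit ℕ)} (h : Y ⊆ Y') {C : WConstraint ℕ}
    (hC : (C.lower.reduct Z).sat Y) : (C.lower.reduct Z).sat Y' := by
  rw [lower_reduct_sat] at *
  exact hC.trans (EReal.coe_le_coe_iff.2 (mixSum_mono h _ C.nonneg))

theorem hornSat_cl (Z : Set (Lit ℕ)) (Ω : Set (WRule ℕ)) :
    hornSat (cl (wProgReduct Z Ω)) (wProgReduct Z Ω) := by
  intro r hr hb Y hY
  refine hY r hr ?_
  obtain ⟨R, -, -, -, -, e⟩ := hr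
  rw [e] at hb ⊢
  simp only [List.forall_mem_map] at hb ⊢
  intro C hC
  exact weightSum_mono_pos (Set.sInter_subset_of_mem hY) (hb C hC)

theorem LitConsistent.mono {Y Z : Set (Lit ℕ)} (h : Y ⊆ Z) (hZ : LitConsistent Z) :
    LitConsistent Y := fun a ha => hZ a ⟨h ha.1, h ha.2⟩

theorem wAnswerSet_iff (Z : Set (Lit ℕ)) (Ω : Set (WRule ℕ)) :
    WAnswerSet Z Ω ↔ LitConsistent Z ∧ (∀ R ∈ Ω, htR Z Z R) ∧
      ∀ Y, Y ⊆ Z → (∀ R ∈ Ω, htR Y Z R) → Y = Z := by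
  unfold WAnswerSet
  rw [htR_self]
  refine and_congr_right fun _ => and_congr_right fun hΩ => ?_
  have hZ : hornSat Z (wProgReduct Z Ω) := (hornSat_iff subset_rfl hΩ).2 ((htR_self Z Ω).2 hΩ)
  have hcl : cl (wProgReduct Z Ω) ⊆ Z := Set.sInter_subset_of_mem hZ
  constructor
  · intro e Y hY h
    refine hY.antisymm ?_
    rw [← e]
    exact Set.sInter_subset_of_mem ((hornSat_iff hY hΩ).2 h)
  · intro h
    exact h _ hcl ((hornSat_iff hcl hΩ).1 (hornSat_cl Z Ω))

theorem answerSet_iff (Z : Set (Lit ℕ)) (P : Set (NRule ℕ)) :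
    AnswerSet Z P ↔ LitConsistent Z ∧ progSat Z (progReduct Z P) ∧
      ∀ Y, Y ⊆ Z → progSat Y (progReduct Z P) → Y = Z := by
  unfold AnswerSet MinimalSat
  refine and_congr_right fun hc => and_congr_right fun _ => ?_
  exact ⟨fun h Y h1 h2 => h Y (hc.mono h1) h2 h1, fun h Y _ h2 h1 => h Y h1 h2⟩

theorem wAnswerSet_iff_answerSet (Z : Set (Lit ℕ)) (Ω : Set (WRule ℕ)) :
    WAnswerSet Z Ω ↔ AnswerSet Z (trProg Ω) := by
  rw [wAnswerSet_iff, answerSet_iff]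
  simp only [progSat_tr_s7]

theorem progSat_union (Y Z : Set (Lit ℕ)) (P Q : Set (NRule ℕ)) :
    progSat Y (progReduct Z (P ∪ Q)) ↔
      progSat Y (progReduct Z P) ∧ progSat Y (progReduct Z Q) := by
  simp only [progSat, progReduct, Set.image_union, Set.mem_union, or_imp, forall_and]

/-- The weight constraint `1 ≤ {l = 1}`. -/
noncomputable def litC (l : Lit ℕ) : WConstraint ℕ :=
  ⟨1, [(RElem.pos l, 1)], ⊤, by simp⟩

theorem htC_litC (Y Z : Set (Lit ℕ)) (l : Lit ℕ) : htC Y Z (litC l) ↔ l ∈ Y := by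
  by_cases h : l ∈ Y <;> simp [htC, litC, mixSum, rsat, h]

/-- The rule `l ← b₁,…,b_n` as a rule with weight constraints. -/
noncomputable def litR (l : Lit ℕ) (b : List (Lit ℕ)) : WRule ℕ := ⟨litC l, b.map litC⟩

theorem htR_litR (Y Z : Set (Lit ℕ)) (l : Lit ℕ) (b : List (Lit ℕ)) :
    htR Y Z (litR l b) ↔ ((∀ x ∈ b, x ∈ Y) → l ∈ Y) := by
  simp only [htR, litR, List.forall_mem_map, htC_litC]
  refine imp_congr_right fun _ => ⟨fun h => h.2, fun h => ⟨?_, h⟩⟩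
  rintro l' ⟨w, hw⟩ _
  simp [litC] at hw
  exact hw.1 ▸ h

/-- Facts for `Y`, and all rules `l ← x` with `l`, `x` in `D`. -/
def testProg (Y D : Set (Lit ℕ)) : Set (WRule ℕ) :=
  {R | (∃ l ∈ Y, R = litR l []) ∨ ∃ l ∈ D, ∃ x ∈ D, R = litR l [x]}

theorem ht_testProg (X Z Y D : Set (Lit ℕ)) :
    (∀ R ∈ testProg Y D, htR X Z R) ↔ Y ⊆ X ∧ ∀ l ∈ D, ∀ x ∈ D, x ∈ X → l ∈ X := by
  constructor
  · intro h
    constructor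
    · intro l hl
      exact (htR_litR X Z l []).1 (h _ (Or.inl ⟨l, hl, rfl⟩)) (by simp)
    · intro l hl x hx hxX
      exact (htR_litR X Z l [x]).1 (h _ (Or.inr ⟨l, hl, x, hx, rfl⟩)) (by simpa using hxX)
  · rintro ⟨h1, h2⟩ R (⟨l, hl, rfl⟩ | ⟨l, hl, x, hx, rfl⟩)
    · exact (htR_litR _ _ _ _).2 fun _ => h1 hl
    · exact (htR_litR _ _ _ _).2 fun h => h2 l hl x hx (h x (by simp))

theorem ht_union (X Z : Set (Lit ℕ)) (A B : Set (WRule ℕ)) :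
    (∀ R ∈ A ∪ B, htR X Z R) ↔ (∀ R ∈ A, htR X Z R) ∧ (∀ R ∈ B, htR X Z R) := by
  simp only [Set.mem_union, or_imp, forall_and]

theorem ht_total {Ω₁ Ω₂ : Set (WRule ℕ)} (h : WStrongEq Ω₁ Ω₂) {Z : Set (Lit ℕ)}
    (hc : LitConsistent Z) (hZ : ∀ R ∈ Ω₁, htR Z Z R) : ∀ R ∈ Ω₂, htR Z Z R := by
  have h1 : WAnswerSet Z (Ω₁ ∪ testProg Z ∅) := by
    rw [wAnswerSet_iff]
    simp only [ht_union, ht_testProg]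
    exact ⟨hc, ⟨hZ, by simp⟩, fun Y hY hh => hY.antisymm hh.2.1⟩
  rw [h, wAnswerSet_iff] at h1
  simp only [ht_union] at h1
  exact h1.2.1.1

theorem ht_sub {Ω₁ Ω₂ : Set (WRule ℕ)} (h : WStrongEq Ω₁ Ω₂) {Y Z : Set (Lit ℕ)}
    (hc : LitConsistent Z) (hYZ : Y ⊆ Z) (hZ : ∀ R ∈ Ω₁, htR Z Z R)
    (hY : ∀ R ∈ Ω₁, htR Y Z R) : ∀ R ∈ Ω₂, htR Y Z R := by
  have hZ2 := ht_total h hc hZ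
  by_contra hn
  have h1 : WAnswerSet Z (Ω₂ ∪ testProg Y (Z \ Y)) := by
    rw [wAnswerSet_iff]
    simp only [ht_union, ht_testProg]
    refine ⟨hc, ⟨hZ2, hYZ, fun l hl _ _ _ => hl.1⟩, ?_⟩
    rintro X hX ⟨hX2, hYX, hr⟩
    refine hX.antisymm ?_
    have hne : ∃ x ∈ X, x ∉ Y := by
      by_contra hcon
      push Not at hcon
      exact hn ((hYX.antisymm hcon) ▸ hX2)
    obtain ⟨x, hxX, hxY⟩ := hne
    intro l hl
    by_cases hlY : l ∈ Y
    · exact hYX hlY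
    · exact hr l ⟨hl, hlY⟩ x ⟨hX hxX, hxY⟩ hxX
  rw [← h, wAnswerSet_iff] at h1
  simp only [ht_union, ht_testProg] at h1
  have e := h1.2.2 Y hYZ ⟨hY, subset_rfl, fun l _ x hx hxY => absurd hxY hx.2⟩
  exact hn (e ▸ hZ2)

theorem answerSet_of_wStrongEq {Ω₁ Ω₂ : Set (WRule ℕ)} (h : WStrongEq Ω₁ Ω₂)
    (P : Set (NRule ℕ)) (Z : Set (Lit ℕ)) (hA : AnswerSet Z (trProg Ω₁ ∪ P)) :
    AnswerSet Z (trProg Ω₂ ∪ P) := by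
  have h' : WStrongEq Ω₂ Ω₁ := fun Ω Z => (h Ω Z).symm
  rw [answerSet_iff] at *
  simp only [progSat_union, progSat_tr_s7] at *
  obtain ⟨hc, ⟨hZ, hP⟩, hm⟩ := hA
  have hZ2 := ht_total h hc hZ
  exact ⟨hc, ⟨hZ2, hP⟩, fun Y hY hh => hm Y hY ⟨ht_sub h' hc hY hZ2 hh.1, hh.2⟩⟩

/-- Programs `Ω₁`, `Ω₂` with weight constraints are strongly equivalent iff their
translations `[Ω₁]`, `[Ω₂]` are strongly equivalent as programs with nested expressions. -/
theorem strong_equiv_iff_translations (Ω₁ Ω₂ : Set (WRule ℕ)) :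
    WStrongEq Ω₁ Ω₂ ↔ StrongEq (trProg Ω₁) (trProg Ω₂) := by
  constructor
  · intro h P Z
    exact ⟨answerSet_of_wStrongEq h P Z,
      answerSet_of_wStrongEq (fun Ω Z => (h Ω Z).symm) P Z⟩
  · intro h Ω Z
    have := h (trProg Ω) Z
    rw [wAnswerSet_iff_answerSet, wAnswerSet_iff_answerSet]
    simpa only [trProg, Set.image_union] using this
end

section
/- For any weight constraint C and any consistent set Z of literals, Z ⊨ [C] if and only if Z ⊨ C. -/
open Classical

theorem sat_bigConj_aux {α : Type} (Z : Set (Lit α)) (l : List (Formula α)) :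
    (bigConj l).sat Z ↔ ∀ F ∈ l, F.sat Z := by
  induction l with
  | nil => simp [bigConj, Formula.sat]
  | cons a l ih => simp [bigConj, Formula.sat, ih]

theorem sat_bigDisj_aux {α : Type} (Z : Set (Lit α)) (l : List (Formula α)) :
    (bigDisj l).sat Z ↔ ∃ F ∈ l, F.sat Z := by
  induction l with
  | nil => simp [bigDisj, Formula.sat]
  | cons a l ih => simp [bigDisj, Formula.sat, ih]

theorem sat_angled_aux {α : Type} (Z : Set (Lit α)) {n : ℕ} (F : Fin n → Formula α)
    (X : Finset (Finset (Fin n))) :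
    (angled F X).sat Z ↔ ∃ I ∈ X, ∀ i ∈ I, (F i).sat Z := by
  simp [angled, sat_bigDisj_aux, sat_bigConj_aux]

theorem sat_toFormula_aux {α : Type} (Z : Set (Lit α)) (c : RElem α) :
    c.toFormula.sat Z ↔ c.sat Z := by
  cases c <;> simp [RElem.toFormula, RElem.sat, Formula.sat]

theorem weightSum_eq_aux {α : Type} (Z : Set (Lit α)) (S : List (RElem α × ℝ)) :
    weightSum Z S = ∑ i ∈ Finset.univ.filter (fun i : Fin S.length => (S.get i).1.sat Z),
      (S.get i).2 := by
  rw [Finset.sum_filter, weightSum]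
  exact (Fin.sum_univ_fun_getElem S (fun p => if p.1.sat Z then p.2 else 0)).symm

/-- Satisfaction of the translated bound, for any upward closed condition on the sum. -/
theorem sat_angled_weight_aux {α : Type} (Z : Set (Lit α)) (S : List (RElem α × ℝ))
    (hS : ∀ p ∈ S, (0 : ℝ) ≤ p.2) (P : ℝ → Prop) (hP : ∀ x y, x ≤ y → P x → P y) :
    (angled (fun i : Fin S.length => (S.get i).1.toFormula)
      (Finset.univ.filter fun I : Finset (Fin S.length) => P (∑ i ∈ I, (S.get i).2))).sat Z ↔
      P (weightSum Z S) := by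
  rw [sat_angled_aux, weightSum_eq_aux]
  constructor
  · rintro ⟨I, hI, h⟩
    refine hP _ _ ?_ (Finset.mem_filter.1 hI).2
    refine Finset.sum_le_sum_of_subset_of_nonneg ?_ fun i _ _ => hS _ (List.get_mem S i)
    intro i hi
    exact Finset.mem_filter.2 ⟨Finset.mem_univ _, (sat_toFormula_aux Z _).1 (h i hi)⟩
  · intro h
    refine ⟨_, Finset.mem_filter.2 ⟨Finset.mem_univ _, h⟩, fun i hi => ?_⟩
    exact (sat_toFormula_aux Z _).2 (Finset.mem_filter.1 hi).2

/-- For any weight constraint `C` and any consistent set `Z` of literals,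
`Z ⊨ [C]` iff `Z ⊨ C`. -/
theorem sat_trWC_iff (C : WConstraint ℕ) (Z : Set (Lit ℕ)) (hZ : LitConsistent Z) :
    (trWC C).sat Z ↔ C.sat Z := by
  have h1 := sat_angled_weight_aux Z C.S C.nonneg (fun x => C.L ≤ (x : EReal))
    (fun x y hxy h => h.trans (EReal.coe_le_coe_iff.2 hxy))
  have h2 := sat_angled_weight_aux Z C.S C.nonneg (fun x => C.U < (x : EReal))
    (fun x y hxy h => h.trans_le (EReal.coe_le_coe_iff.2 hxy))
  have h3 : (trLower C.L C.S).sat Z ↔ C.L ≤ (weightSum Z C.S : EReal) := by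
    rw [← h1, trLower]
    congr!
  have h4 : (trUpper C.S C.U).sat Z ↔ (weightSum Z C.S : EReal) ≤ C.U := by
    rw [← not_lt, ← h2, trUpper, Formula.sat]
    congr!
  exact and_congr h3 h4
end
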